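/- arXiv:2009.00573 — 3 statements merged into one kernel-verified Lean document; each statement's English description precedes it below -/
import Mathlib

section
/- Let d ≥ 1 and let β : ℝ → ℝ be smooth with β(0) = 0, satisfying the growth condition |d^n/dt^n (β(t²)t)| ≤ C_n t^{p−n} for all t ≥ 1 and all n ≥ 0, for some p < d* (where d* = ∞ for d = 1,2 and d* = (d+2)/(d−2) for d ≥ 3). Let B : ℝ → ℝ be the primitive of β with B(0) = 0 and assume B(t) ≥ 0 for all t ≥ 0. Then the zero solution of the NLS is orbitally stable: for every ε > 0 there exists δ > 0 such that every classical solution u of i∂_t u = −Δu + β(|u|²)u on [0,∞) × ℝ^d with ‖u(0,·)‖_{H¹} < δ satisfies sup_{t ≥ 0} ‖u(t,·)‖_{H¹} < ε. -/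
open MeasureTheory

/-- The Laplacian of a function on `ℝ^d`, as a sum of second partial derivatives. -/
noncomputable def lap {d : ℕ} {F : Type*} [NormedAddCommGroup F] [NormedSpace ℝ F]
    (f : EuclideanSpace ℝ (Fin d) → F) (x : EuclideanSpace ℝ (Fin d)) : F :=
  ∑ i : Fin d,
    fderiv ℝ (fun y => fderiv ℝ f y (EuclideanSpace.single i 1)) x (EuclideanSpace.single i 1)

/-- The `H¹` norm: `‖g‖_{H¹}² = ∫ (|g|² + |∇g|²)`. -/
noncomputable def H1norm {d : ℕ} (g : EuclideanSpace ℝ (Fin d) → ℂ) : ℝ :=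
  Real.sqrt (∫ x : EuclideanSpace ℝ (Fin d),
    (‖g x‖ ^ 2 + ∑ i : Fin d, ‖fderiv ℝ g x (EuclideanSpace.single i 1)‖ ^ 2))

/-- A classical solution of the NLS `i ∂_t u = -Δu + β(|u|²)u` on `[0,∞) × ℝ^d`. -/
structure IsClassicalSolution {d : ℕ} (β : ℝ → ℝ)
    (u : ℝ → EuclideanSpace ℝ (Fin d) → ℂ) : Prop where
  smooth : ContDiff ℝ (⊤ : ℕ∞) (fun p : ℝ × EuclideanSpace ℝ (Fin d) => u p.1 p.2)
  eqn : ∀ t : ℝ, 0 ≤ t → ∀ x, Complex.I * deriv (fun s => u s x) t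
      = - lap (u t) x + (β (‖u t x‖ ^ 2) : ℂ) * u t x
  decay : ∀ T > (0 : ℝ), ∀ n N : ℕ, ∃ C : ℝ, ∀ t ∈ Set.Icc (0 : ℝ) T,
      ∀ x, (1 + ‖x‖) ^ N * ‖iteratedFDeriv ℝ n (u t) x‖ ≤ C

/-!
Mass `∫ |u|²` and energy `∫ (|∇u|² + B(|u|²))` are conserved, and together they are
`‖u‖²_{H¹} + ∫ B(|u|²)`. At time `t` the potential term is bounded below, as `B ≥ 0`; the argument
even allows `B(s) ≥ -K s` for `s ≥ 0`, the defect then being absorbed by the conserved mass. At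
time `0`, the growth condition gives `|B(r²)| ≲ r² + r^a` for some `a ≥ 2` with `H¹ ⊆ L^a`, so the
potential term is `O(‖u(0)‖²_{H¹})` as long as `‖u(0)‖_{H¹} ≤ 1`. Hence `‖u(t)‖_{H¹}` is at most a
constant times `‖u(0)‖_{H¹}`.

For `d ≥ 3`, `a = 2 d / (d - 2)` is the critical Sobolev exponent. For `d = 1, 2`, the embeddings
into `L^a` for even `a` follow by induction from `∫ |g|^(a+2) ≲ ‖g‖²_{H¹} ∫ |g|^a`: in dimension `1`
this is the embedding `H¹ ⊆ L^∞`, in dimension `2` it is the inequality of Gagliardo and Nirenberg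
`∫ h² ≲ (∫ |∇h|)²` applied to `h = |g|^(a/2+1)`.
-/

section Sobolev

open Filter Module
open scoped ENNReal NNReal Topology

variable {E F : Type*} [NormedAddCommGroup E] [InnerProductSpace ℝ E] [FiniteDimensional ℝ E]
  [MeasurableSpace E] [BorelSpace E] [NormedAddCommGroup F]

/-- The squared `H¹` norm `∫ (‖g‖² + ‖Dg‖²)` with values in `[0, ∞]`, where `‖Dg‖` is the operator
norm of the derivative, as in Mathlib's Gagliardo-Nirenberg-Sobolev inequalities. -/
noncomputable def eH1NormSq [NormedSpace ℝ F] (g : E → F) : ℝ≥0∞ :=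
  ∫⁻ x, (‖g x‖ₑ ^ 2 + ‖fderiv ℝ g x‖ₑ ^ 2)

/-- The embedding of `H¹` into `L^a`, for compactly supported `C¹` functions `E → F`. -/
def SobolevEmbedding (E F : Type*) [NormedAddCommGroup E] [InnerProductSpace ℝ E]
    [FiniteDimensional ℝ E] [MeasurableSpace E] [BorelSpace E] [NormedAddCommGroup F]
    [NormedSpace ℝ F] (a : ℝ) : Prop :=
  ∃ S : ℝ≥0, ∀ g : E → F, ContDiff ℝ 1 g → HasCompactSupport g →
    ∫⁻ x, ‖g x‖ₑ ^ a ≤ S * eH1NormSq g ^ (a / 2)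

lemma sq_lintegral_mul_le {α : Type*} [MeasurableSpace α] (μ : Measure α) {f g : α → ℝ≥0∞}
    (hf : AEMeasurable f μ) (hg : AEMeasurable g μ) :
    (∫⁻ x, f x * g x ∂μ) ^ 2 ≤ (∫⁻ x, f x ^ 2 ∂μ) * ∫⁻ x, g x ^ 2 ∂μ := by
  refine (pow_le_pow_left'
    (ENNReal.lintegral_mul_le_Lp_mul_Lq μ Real.HolderConjugate.two_two hf hg) 2).trans_eq ?_
  rw [mul_pow]
  simp only [← ENNReal.rpow_natCast, ← ENNReal.rpow_mul]
  norm_num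

section NormedSpace

variable [NormedSpace ℝ F]

lemma lintegral_enorm_sq_le_eH1NormSq (g : E → F) : ∫⁻ x, ‖g x‖ₑ ^ 2 ≤ eH1NormSq g :=
  lintegral_mono fun _ => le_self_add

lemma lintegral_enorm_fderiv_sq_le_eH1NormSq (g : E → F) :
    ∫⁻ x, ‖fderiv ℝ g x‖ₑ ^ 2 ≤ eH1NormSq g :=
  lintegral_mono fun _ => le_add_self

lemma SobolevEmbedding.two : SobolevEmbedding E F 2 :=
  ⟨1, fun g _ _ => by simpa using lintegral_enorm_sq_le_eH1NormSq g⟩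

lemma SobolevEmbedding.add_two {a : ℝ} (ha : 0 ≤ a)
    (hstep : ∃ C : ℝ≥0, ∀ g : E → F, ContDiff ℝ 1 g → HasCompactSupport g →
      ∫⁻ x, ‖g x‖ₑ ^ (a + 2) ≤ C * (eH1NormSq g * ∫⁻ x, ‖g x‖ₑ ^ a))
    (h : SobolevEmbedding E F a) : SobolevEmbedding E F (a + 2) := by
  obtain ⟨C, hC⟩ := hstep
  obtain ⟨S, hS⟩ := h
  refine ⟨C * S, fun g hg hgc => (hC g hg hgc).trans ?_⟩
  have hpow : eH1NormSq g * eH1NormSq g ^ (a / 2) = eH1NormSq g ^ ((a + 2) / 2) := by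
    rw [add_div, div_self two_ne_zero, add_comm, ENNReal.rpow_add_of_nonneg _ _ zero_le_one
      (by positivity), ENNReal.rpow_one]
  calc (C : ℝ≥0∞) * (eH1NormSq g * ∫⁻ x, ‖g x‖ₑ ^ a)
      ≤ C * (eH1NormSq g * (S * eH1NormSq g ^ (a / 2))) := by gcongr; exact hS g hg hgc
    _ = C * S * (eH1NormSq g * eH1NormSq g ^ (a / 2)) := by ring
    _ = (C * S : ℝ≥0) * eH1NormSq g ^ ((a + 2) / 2) := by rw [hpow, ENNReal.coe_mul]

lemma enorm_fderiv_smul_le {X : Type*} [NormedAddCommGroup X] [NormedSpace ℝ X] {ψ : X → ℝ}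
    {g : X → F} (hψ : ContDiff ℝ 1 ψ) (hg : ContDiff ℝ 1 g) (x : X) :
    ‖fderiv ℝ (fun y => ψ y • g y) x‖ₑ
      ≤ ‖ψ x‖ₑ * ‖fderiv ℝ g x‖ₑ + ‖fderiv ℝ ψ x‖ₑ * ‖g x‖ₑ := by
  rw [fderiv_fun_smul (hψ.differentiable one_ne_zero x) (hg.differentiable one_ne_zero x)]
  simp only [enorm_eq_nnnorm]
  norm_cast
  exact (nnnorm_add_le _ _).trans (by simp [nnnorm_smul])

lemma eH1NormSq_smul_le {K : ℝ≥0} {ψ : E → ℝ} {g : E → F} (hψ : ContDiff ℝ 1 ψ)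
    (hψ_le : ∀ x, ‖ψ x‖ₑ ≤ 1) (hDψ_le : ∀ x, ‖fderiv ℝ ψ x‖ₑ ≤ K) (hg : ContDiff ℝ 1 g) :
    eH1NormSq (fun x => ψ x • g x) ≤ (2 * K ^ 2 + 2 : ℝ≥0) * eH1NormSq g := by
  unfold eH1NormSq
  rw [← lintegral_const_mul' _ _ ENNReal.coe_ne_top]
  refine lintegral_mono fun x => ?_
  have hsq (b c : ℝ≥0∞) : (b + c) ^ 2 ≤ 2 * (b ^ 2 + c ^ 2) := by
    have := ENNReal.rpow_add_le_mul_rpow_add_rpow b c (one_le_two (α := ℝ))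
    norm_num at this
    exact this
  calc ‖ψ x • g x‖ₑ ^ 2 + ‖fderiv ℝ (fun y => ψ y • g y) x‖ₑ ^ 2
      ≤ (1 * ‖g x‖ₑ) ^ 2 + (1 * ‖fderiv ℝ g x‖ₑ + K * ‖g x‖ₑ) ^ 2 := by
        grw [enorm_fderiv_smul_le hψ hg, enorm_smul, hψ_le, hDψ_le]
    _ ≤ (1 * ‖g x‖ₑ) ^ 2 + 2 * ((1 * ‖fderiv ℝ g x‖ₑ) ^ 2 + (K * ‖g x‖ₑ) ^ 2) := by
        grw [hsq]
    _ = (2 * K ^ 2 + 1) * ‖g x‖ₑ ^ 2 + (0 + 2) * ‖fderiv ℝ g x‖ₑ ^ 2 := by ring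
    _ ≤ (2 * K ^ 2 + 2) * ‖g x‖ₑ ^ 2 + (2 * K ^ 2 + 2) * ‖fderiv ℝ g x‖ₑ ^ 2 := by
        gcongr
        · exact one_le_two
        · exact zero_le
    _ = (2 * K ^ 2 + 2 : ℝ≥0) * (‖g x‖ₑ ^ 2 + ‖fderiv ℝ g x‖ₑ ^ 2) := by
        push_cast
        ring

lemma exists_seq_cutoff (E : Type*) [NormedAddCommGroup E] [InnerProductSpace ℝ E]
    [FiniteDimensional ℝ E] :
    ∃ (K : ℝ≥0) (ψ : ℕ → E → ℝ),
      (∀ n, ContDiff ℝ 1 (ψ n)) ∧ (∀ n, HasCompactSupport (ψ n)) ∧ (∀ n x, ‖ψ n x‖ₑ ≤ 1) ∧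
      (∀ n x, ‖fderiv ℝ (ψ n) x‖ₑ ≤ K) ∧ ∀ x, ∀ᶠ n in atTop, ψ n x = 1 := by
  let χ : ContDiffBump (0 : E) := ⟨1, 2, one_pos, one_lt_two⟩
  have hχ : ContDiff ℝ 1 χ := χ.contDiff
  obtain ⟨K, hK⟩ := (χ.hasCompactSupport.fderiv (𝕜 := ℝ)).exists_bound_of_continuous
    (hχ.continuous_fderiv one_ne_zero)
  lift K to ℝ≥0 using (norm_nonneg _).trans (hK 0)
  let c (n : ℕ) : ℝ := 1 / ((n : ℝ) + 1)
  have hc_pos (n : ℕ) : 0 < c n := by positivity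
  have hc_le (n : ℕ) : ‖c n‖ₑ ≤ 1 := by
    rw [← ofReal_norm, Real.norm_of_nonneg (hc_pos n).le, ENNReal.ofReal_le_one]
    exact div_le_one_of_le₀ (by simp) (by positivity)
  refine ⟨K, fun n x => χ (c n • x), fun n => hχ.comp (contDiff_const_smul (c n)),
    fun n => χ.hasCompactSupport.comp_smul (hc_pos n).ne', fun n x => ?_, fun n x => ?_,
    fun x => ?_⟩
  · rw [← ofReal_norm, Real.norm_of_nonneg χ.nonneg, ENNReal.ofReal_le_one]
    exact χ.le_one
  · rw [fderiv_comp_smul, enorm_smul]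
    grw [hc_le, one_mul, ← ofReal_norm, hK, ENNReal.ofReal_coe_nnreal]
  · have hlim : Tendsto (fun n => c n • x) atTop (𝓝 0) := by
      simpa [c] using (tendsto_one_div_add_atTop_nhds_zero_nat (𝕜 := ℝ)).smul_const x
    exact hlim.eventually χ.eventuallyEq_one

lemma SobolevEmbedding.exists_lintegral_le {a : ℝ} (ha : 0 < a) (h : SobolevEmbedding E F a) :
    ∃ S : ℝ≥0, ∀ g : E → F, ContDiff ℝ 1 g → ∫⁻ x, ‖g x‖ₑ ^ a ≤ S * eH1NormSq g ^ (a / 2) := by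
  obtain ⟨S, hS⟩ := h
  obtain ⟨K, ψ, hψ, hψ_supp, hψ_le, hDψ_le, hψ_one⟩ := exists_seq_cutoff E
  have ha2 : 0 ≤ a / 2 := by positivity
  refine ⟨S * (2 * K ^ 2 + 2) ^ (a / 2), fun g hg => ?_⟩
  have hψg (n : ℕ) : ContDiff ℝ 1 fun x => ψ n x • g x := (hψ n).smul hg
  have hlim (x : E) : liminf (fun n => ‖ψ n x • g x‖ₑ ^ a) atTop = ‖g x‖ₑ ^ a := by
    refine (tendsto_const_nhds.congr' ?_).liminf_eq
    filter_upwards [hψ_one x] with n hn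
    rw [hn, one_smul]
  calc ∫⁻ x, ‖g x‖ₑ ^ a = ∫⁻ x, liminf (fun n => ‖ψ n x • g x‖ₑ ^ a) atTop := by
        simp only [hlim]
    _ ≤ liminf (fun n => ∫⁻ x, ‖ψ n x • g x‖ₑ ^ a) atTop :=
        lintegral_liminf_le fun n => (hψg n).continuous.enorm.measurable.pow_const _
    _ ≤ S * ((2 * K ^ 2 + 2 : ℝ≥0) * eH1NormSq g) ^ (a / 2) := by
        refine liminf_le_of_le (by isBoundedDefault) fun b hb => ?_
        obtain ⟨n, hn⟩ := hb.exists
        grw [hn, hS _ (hψg n) (hψ_supp n).smul_right,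
          eH1NormSq_smul_le (hψ n) (hψ_le n) (hDψ_le n) hg]
    _ = (S * (2 * K ^ 2 + 2) ^ (a / 2) : ℝ≥0) * eH1NormSq g ^ (a / 2) := by
        rw [ENNReal.mul_rpow_of_nonneg _ _ ha2, ENNReal.coe_mul,
          ENNReal.coe_rpow_of_nonneg _ ha2, mul_assoc]

end NormedSpace

section InnerProductSpace

variable [InnerProductSpace ℝ F]

lemma sq_lintegral_enorm_fderiv_norm_rpow_le {γ : ℝ≥0} (hγ : 1 < γ) {g : E → F}
    (hg : ContDiff ℝ 1 g) :
    (∫⁻ x, ‖fderiv ℝ (fun y => ‖g y‖ ^ (γ : ℝ)) x‖ₑ) ^ 2 ≤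
      γ ^ 2 * ((∫⁻ x, ‖g x‖ₑ ^ (2 * ((γ : ℝ) - 1))) * ∫⁻ x, ‖fderiv ℝ g x‖ₑ ^ 2) := by
  have hg_meas : Measurable fun x => ‖g x‖ₑ ^ ((γ : ℝ) - 1) :=
    hg.continuous.enorm.measurable.pow_const _
  have hDg_meas : Measurable fun x => ‖fderiv ℝ g x‖ₑ :=
    (hg.continuous_fderiv one_ne_zero).enorm.measurable
  have hsq (x : E) : (‖g x‖ₑ ^ ((γ : ℝ) - 1)) ^ 2 = ‖g x‖ₑ ^ (2 * ((γ : ℝ) - 1)) := by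
    rw [← ENNReal.rpow_mul_natCast, Nat.cast_ofNat, mul_comm]
  calc (∫⁻ x, ‖fderiv ℝ (fun y => ‖g y‖ ^ (γ : ℝ)) x‖ₑ) ^ 2
      ≤ (∫⁻ x, γ * (‖g x‖ₑ ^ ((γ : ℝ) - 1) * ‖fderiv ℝ g x‖ₑ)) ^ 2 := by
        gcongr with x
        rw [← mul_assoc]
        exact enorm_fderiv_norm_rpow_le (hg.differentiable one_ne_zero) hγ
    _ = γ ^ 2 * (∫⁻ x, ‖g x‖ₑ ^ ((γ : ℝ) - 1) * ‖fderiv ℝ g x‖ₑ) ^ 2 := by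
        rw [lintegral_const_mul' _ _ ENNReal.coe_ne_top, mul_pow]
    _ ≤ γ ^ 2 * ((∫⁻ x, (‖g x‖ₑ ^ ((γ : ℝ) - 1)) ^ 2) * ∫⁻ x, ‖fderiv ℝ g x‖ₑ ^ 2) := by
        gcongr
        exact sq_lintegral_mul_le _ hg_meas.aemeasurable hDg_meas.aemeasurable
    _ = γ ^ 2 * ((∫⁻ x, ‖g x‖ₑ ^ (2 * ((γ : ℝ) - 1))) * ∫⁻ x, ‖fderiv ℝ g x‖ₑ ^ 2) := by
        simp only [hsq]

lemma lintegral_enorm_rpow_add_two_le_of_finrank_eq_two (hE : finrank ℝ E = 2) {a : ℝ≥0}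
    (ha : 0 < a) {g : E → F} (hg : ContDiff ℝ 1 g) (hgc : HasCompactSupport g) :
    ∫⁻ x, ‖g x‖ₑ ^ ((a : ℝ) + 2) ≤
      (lintegralPowLePowLIntegralFDerivConst (volume : Measure E) 2 * (a / 2 + 1) ^ 2 : ℝ≥0)
        * (eH1NormSq g * ∫⁻ x, ‖g x‖ₑ ^ (a : ℝ)) := by
  set γ : ℝ≥0 := a / 2 + 1 with hγ
  have hγ1 : 1 < γ := by simpa [hγ] using ha
  have hγa : (γ : ℝ) * 2 = a + 2 := by rw [hγ]; push_cast; ring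
  have hγa' : 2 * ((γ : ℝ) - 1) = a := by linarith
  have hsupp : HasCompactSupport fun x => ‖g x‖ ^ (γ : ℝ) :=
    hgc.comp_left (g := fun z : F => ‖z‖ ^ (γ : ℝ)) (by simp [(zero_lt_one.trans hγ1).ne'])
  have hconj : Real.HolderConjugate (finrank ℝ E) (2 : ℝ) := by
    simpa [hE] using Real.HolderConjugate.two_two
  have hGNS := lintegral_pow_le_pow_lintegral_fderiv (volume : Measure E)
    (hg.norm_rpow (NNReal.one_lt_coe.2 hγ1)) hsupp hconj
  have hpow (x : E) : ‖‖g x‖ ^ (γ : ℝ)‖ₑ ^ (2 : ℝ) = ‖g x‖ₑ ^ ((a : ℝ) + 2) := by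
    rw [Real.enorm_rpow_of_nonneg (norm_nonneg _) γ.coe_nonneg, enorm_norm, ← ENNReal.rpow_mul, hγa]
  have hgrad := sq_lintegral_enorm_fderiv_norm_rpow_le hγ1 hg
  simp only [hpow, ENNReal.rpow_ofNat] at hGNS
  rw [hγa'] at hgrad
  push_cast
  rw [mul_assoc, mul_comm (eH1NormSq g)]
  grw [hGNS, hgrad, lintegral_enorm_fderiv_sq_le_eH1NormSq]

lemma enorm_sq_le_eH1NormSq_of_finrank_eq_one (hE : finrank ℝ E = 1) {g : E → F}
    (hg : ContDiff ℝ 1 g) (hgc : HasCompactSupport g) (x : E) : ‖g x‖ₑ ^ 2 ≤ eH1NormSq g := by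
  let L : ℝ ≃ₗᵢ[ℝ] E := (OrthonormalBasis.singleton (Fin 1) ℝ).equiv
    ((stdOrthonormalBasis ℝ E).reindex (finCongr hE)) (Equiv.refl _)
  have hderiv (s : ℝ) : HasDerivAt (fun s => g (L s)) (fderiv ℝ g (L s) (L 1)) s :=
    (hg.differentiable one_ne_zero (L s)).hasFDerivAt.comp_hasDerivAt s
      L.toContinuousLinearEquiv.toContinuousLinearMap.hasDerivAt
  have hsq_deriv (s : ℝ) : ‖deriv (fun s => ‖g (L s)‖ ^ 2) s‖ₑ
      ≤ ‖g (L s)‖ₑ ^ 2 + ‖fderiv ℝ g (L s)‖ₑ ^ 2 := by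
    have hL1 : ‖fderiv ℝ g (L s) (L 1)‖ ≤ ‖fderiv ℝ g (L s)‖ :=
      (fderiv ℝ g (L s)).unit_le_opNorm _ (by simp)
    have hinner := norm_inner_le_norm (𝕜 := ℝ) (g (L s)) (fderiv ℝ g (L s) (L 1))
    rw [(hderiv s).norm_sq.deriv, ← ofReal_norm, ← ofReal_norm, ← ofReal_norm,
      ← ENNReal.ofReal_pow (norm_nonneg _), ← ENNReal.ofReal_pow (norm_nonneg _),
      ← ENNReal.ofReal_add (by positivity) (by positivity), norm_mul, Real.norm_two]
    gcongr
    nlinarith [two_mul_le_add_sq ‖g (L s)‖ ‖fderiv ℝ g (L s)‖, norm_nonneg (g (L s))]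
  have hsupp : HasCompactSupport fun s => ‖g (L s)‖ ^ 2 :=
    (hgc.comp_homeomorph L.toHomeomorph).comp_left (g := fun z : F => ‖z‖ ^ 2) (by simp)
  calc ‖g x‖ₑ ^ 2 = ‖‖g (L (L.symm x))‖ ^ 2‖ₑ := by simp [enorm_pow]
    _ ≤ ∫⁻ s in Set.Iic (L.symm x), ‖deriv (fun s => ‖g (L s)‖ ^ 2) s‖ₑ :=
        hsupp.enorm_le_lintegral_Ici_deriv ((hg.comp L.contDiff).norm_sq ℝ) _
    _ ≤ ∫⁻ s, (‖g (L s)‖ₑ ^ 2 + ‖fderiv ℝ g (L s)‖ₑ ^ 2) :=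
        (setLIntegral_le_lintegral _ _).trans (lintegral_mono hsq_deriv)
    _ = eH1NormSq g := L.measurePreserving.lintegral_comp_emb
        L.toHomeomorph.measurableEmbedding fun x => ‖g x‖ₑ ^ 2 + ‖fderiv ℝ g x‖ₑ ^ 2

lemma lintegral_enorm_rpow_add_two_le_of_finrank_eq_one (hE : finrank ℝ E = 1) {a : ℝ}
    (ha : 0 ≤ a) {g : E → F} (hg : ContDiff ℝ 1 g) (hgc : HasCompactSupport g) :
    ∫⁻ x, ‖g x‖ₑ ^ (a + 2) ≤ eH1NormSq g * ∫⁻ x, ‖g x‖ₑ ^ a := by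
  have hg_meas : Measurable fun x => ‖g x‖ₑ := hg.continuous.enorm.measurable
  rw [← lintegral_const_mul _ (by fun_prop)]
  refine lintegral_mono fun x => ?_
  rw [add_comm, ENNReal.rpow_add_of_nonneg _ _ zero_le_two ha, ENNReal.rpow_ofNat]
  gcongr
  exact enorm_sq_le_eH1NormSq_of_finrank_eq_one hE hg hgc x

lemma sobolevEmbedding_even (hE : finrank ℝ E = 1 ∨ finrank ℝ E = 2) (m : ℕ) :
    SobolevEmbedding E F (2 * (m + 1)) := by
  induction m with
  | zero => simpa using SobolevEmbedding.two
  | succ m ih =>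
    have hsucc : (2 * ((m + 1 : ℕ) + 1) : ℝ) = 2 * (m + 1) + 2 := by push_cast; ring
    rw [hsucc]
    refine SobolevEmbedding.add_two (by positivity) ?_ ih
    rcases hE with hE | hE
    · refine ⟨1, fun g hg hgc => ?_⟩
      simpa using lintegral_enorm_rpow_add_two_le_of_finrank_eq_one hE (by positivity) hg hgc
    · obtain ⟨a, ha⟩ : ∃ a : ℝ≥0, (a : ℝ) = 2 * (m + 1) := ⟨2 * (m + 1), by simp⟩
      have ha0 : 0 < a := NNReal.coe_pos.1 (by rw [ha]; positivity)
      rw [← ha]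
      exact ⟨_, fun g => lintegral_enorm_rpow_add_two_le_of_finrank_eq_two hE ha0⟩

lemma sobolevEmbedding_critical (hE : 2 < finrank ℝ E) :
    SobolevEmbedding E F (2 * finrank ℝ E / (finrank ℝ E - 2)) := by
  have hE' : (2 : ℝ) < finrank ℝ E := by exact_mod_cast hE
  have hE0 : (0 : ℝ) < finrank ℝ E - 2 := by linarith
  obtain ⟨a, ha⟩ : ∃ a : ℝ≥0, (a : ℝ) = 2 * finrank ℝ E / (finrank ℝ E - 2) :=
    ⟨⟨_, by positivity⟩, rfl⟩
  have ha0 : (0 : ℝ) < a := by rw [ha]; positivity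
  have hconj : (a : ℝ)⁻¹ = ((2 : ℝ≥0) : ℝ)⁻¹ - (finrank ℝ E : ℝ)⁻¹ := by
    rw [ha]; push_cast; field_simp
  rw [← ha]
  refine ⟨eLpNormLESNormFDerivOfEqInnerConst (volume : Measure E) (2 : ℝ≥0) ^ (a : ℝ),
    fun g hg hgc => ?_⟩
  have hGNS := ENNReal.rpow_le_rpow (eLpNorm_le_eLpNorm_fderiv_of_eq_inner volume hg hgc
    one_le_two (by lia) hconj) a.coe_nonneg
  rw [ENNReal.mul_rpow_of_nonneg _ _ ha0.le,
    eLpNorm_nnreal_pow_eq_lintegral (NNReal.coe_pos.1 ha0).ne',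
    eLpNorm_nnreal_eq_lintegral two_ne_zero, ← ENNReal.rpow_mul,
    ← ENNReal.coe_rpow_of_nonneg _ ha0.le, NNReal.coe_ofNat, one_div_mul_eq_div] at hGNS
  grw [hGNS, ← lintegral_enorm_fderiv_sq_le_eH1NormSq]
  simp

end InnerProductSpace

end Sobolev

section H1norm

variable {d : ℕ}

lemma norm_sq_le_sum_norm_sq_apply {ι : Type*} [Fintype ι] {E F : Type*} [NormedAddCommGroup E]
    [InnerProductSpace ℝ E] [NormedAddCommGroup F] [NormedSpace ℝ F]
    (b : OrthonormalBasis ι ℝ E) (L : E →L[ℝ] F) : ‖L‖ ^ 2 ≤ ∑ i, ‖L (b i)‖ ^ 2 := by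
  suffices h : ‖L‖ ≤ √(∑ i, ‖L (b i)‖ ^ 2) from
    (Real.le_sqrt (norm_nonneg _) (by positivity)).1 h
  refine L.opNorm_le_bound (Real.sqrt_nonneg _) fun x => ?_
  calc ‖L x‖ = ‖∑ i, b.repr x i • L (b i)‖ := by
        conv_lhs => rw [← b.sum_repr x, map_sum]
        simp only [map_smul]
    _ ≤ ∑ i, ‖b.repr x i‖ * ‖L (b i)‖ := by
        simpa only [norm_smul] using norm_sum_le _ fun i => b.repr x i • L (b i)
    _ ≤ √(∑ i, ‖b.repr x i‖ ^ 2) * √(∑ i, ‖L (b i)‖ ^ 2) := Real.sum_mul_le_sqrt_mul_sqrt _ _ _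
    _ = √(∑ i, ‖L (b i)‖ ^ 2) * ‖x‖ := by
        rw [mul_comm, ← EuclideanSpace.norm_eq, LinearIsometryEquiv.norm_map]

lemma H1norm_sq (g : EuclideanSpace ℝ (Fin d) → ℂ) :
    H1norm g ^ 2 = ∫ x, (‖g x‖ ^ 2 + ∑ i, ‖fderiv ℝ g x (EuclideanSpace.single i 1)‖ ^ 2) :=
  Real.sq_sqrt (integral_nonneg fun _ => by positivity)

lemma eH1NormSq_le_ofReal_H1norm_sq {g : EuclideanSpace ℝ (Fin d) → ℂ}
    (hg : Integrable fun x =>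
      ‖g x‖ ^ 2 + ∑ i, ‖fderiv ℝ g x (EuclideanSpace.single i 1)‖ ^ 2) :
    eH1NormSq g ≤ ENNReal.ofReal (H1norm g ^ 2) := by
  rw [H1norm_sq, ofReal_integral_eq_lintegral_ofReal hg (.of_forall fun x => by positivity)]
  refine lintegral_mono fun x => ?_
  rw [← ofReal_norm, ← ofReal_norm, ← ENNReal.ofReal_pow (norm_nonneg _),
    ← ENNReal.ofReal_pow (norm_nonneg _), ← ENNReal.ofReal_add (by positivity) (by positivity)]
  gcongr
  simpa using norm_sq_le_sum_norm_sq_apply (EuclideanSpace.basisFun (Fin d) ℝ) (fderiv ℝ g x)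

end H1norm

section Potential

open scoped NNReal

lemma exists_abs_le_one_add_rpow {β : ℝ → ℝ} (hβ : Continuous β) {p C a : ℝ} (ha : p + 1 ≤ a)
    (hgrowth : ∀ t, 1 ≤ t → |β (t ^ 2) * t| ≤ C * t ^ p) :
    ∃ K : ℝ≥0, ∀ r, 0 ≤ r → |β (r ^ 2)| ≤ K * (1 + r ^ (a - 2)) := by
  obtain ⟨K, hK⟩ := (isCompact_Icc (a := (0 : ℝ)) (b := 1)).exists_bound_of_continuousOn
    (hβ.comp (continuous_pow 2)).continuousOn
  lift K to ℝ≥0 using (norm_nonneg _).trans (hK 0 (by simp))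
  have hC : 0 ≤ C := by simpa using (abs_nonneg _).trans (hgrowth 1 le_rfl)
  lift C to ℝ≥0 using hC
  refine ⟨K + C, fun r hr => ?_⟩
  have hra : 0 ≤ r ^ (a - 2) := Real.rpow_nonneg hr _
  push_cast
  rcases le_total r 1 with hr1 | hr1
  · have : |β (r ^ 2)| ≤ K := hK r ⟨hr, hr1⟩
    nlinarith [mul_nonneg K.2 hra, mul_nonneg C.2 hra, C.2]
  · have hr0 : 0 < r := by linarith
    have hlarge : |β (r ^ 2)| ≤ C * r ^ (p - 1) := by
      rw [Real.rpow_sub_one hr0.ne', ← mul_div_assoc, le_div_iff₀ hr0]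
      simpa [abs_mul, abs_of_pos hr0] using hgrowth r hr1
    have hexp : r ^ (p - 1) ≤ r ^ (a - 2) :=
      Real.rpow_le_rpow_of_exponent_le hr1 (by linarith)
    nlinarith [mul_le_mul_of_nonneg_left hexp C.2, mul_nonneg K.2 hra, K.2, C.2]

lemma abs_primitive_sq_le {β B : ℝ → ℝ} (hB : ∀ t, HasDerivAt B (β t) t) (hB0 : B 0 = 0)
    {K a : ℝ} (hK : 0 ≤ K) (ha : 2 ≤ a) (hβ : ∀ r, 0 ≤ r → |β (r ^ 2)| ≤ K * (1 + r ^ (a - 2)))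
    {r : ℝ} (hr : 0 ≤ r) : |B (r ^ 2)| ≤ K * (r ^ 2 + r ^ a) := by
  have hβ_le (s : ℝ) (hs : s ∈ Set.Icc 0 (r ^ 2)) : ‖β s‖ ≤ K * (1 + r ^ (a - 2)) := by
    have hsr : √s ≤ r := (Real.sqrt_le_left hr).2 hs.2
    calc ‖β s‖ = |β (√s ^ 2)| := by rw [Real.sq_sqrt hs.1, Real.norm_eq_abs]
      _ ≤ K * (1 + √s ^ (a - 2)) := hβ _ (Real.sqrt_nonneg s)
      _ ≤ K * (1 + r ^ (a - 2)) := by gcongr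
  have hmvt := (convex_Icc 0 (r ^ 2)).norm_image_sub_le_of_norm_hasDerivWithin_le
    (fun s _ => (hB s).hasDerivWithinAt) hβ_le (x := 0) (y := r ^ 2) (by simp [sq_nonneg])
    (by simp [sq_nonneg])
  have hpow : r ^ (a - 2) * r ^ 2 = r ^ a := by
    rw [← Real.rpow_natCast, ← Real.rpow_add_of_nonneg hr (by linarith) (by simp)]
    norm_num
  simp only [hB0, sub_zero, Real.norm_eq_abs, abs_sq] at hmvt
  linear_combination hmvt + K * hpow

lemma exists_sobolevEmbedding {d : ℕ} (hd : 1 ≤ d) {p : ℝ}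
    (hp : 3 ≤ d → p ≤ ((d : ℝ) + 2) / ((d : ℝ) - 2)) :
    ∃ a, p + 1 ≤ a ∧ 2 ≤ a ∧ SobolevEmbedding (EuclideanSpace ℝ (Fin d)) ℂ a := by
  rcases lt_or_ge d 3 with hd3 | hd3
  · obtain ⟨m, hm⟩ := exists_nat_ge p
    have : (0 : ℝ) ≤ m := m.cast_nonneg
    refine ⟨2 * (m + 1), by linarith, by linarith, sobolevEmbedding_even ?_ m⟩
    rw [finrank_euclideanSpace_fin]
    lia
  · have hd3' : (3 : ℝ) ≤ d := by exact_mod_cast hd3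
    have hd2 : (0 : ℝ) < d - 2 := by linarith
    have hcrit : (2 * d / (d - 2) : ℝ) = (d + 2) / (d - 2) + 1 := by field_simp; ring
    refine ⟨2 * d / (d - 2), ?_, ?_, ?_⟩
    · linarith [hp hd3]
    · rw [le_div_iff₀ hd2]
      linarith
    · simpa using sobolevEmbedding_critical (E := EuclideanSpace ℝ (Fin d)) (F := ℂ) (by simpa)

lemma SobolevEmbedding.exists_abs_integral_comp_norm_le {d : ℕ} {a : ℝ} (ha : 2 ≤ a)
    (h : SobolevEmbedding (EuclideanSpace ℝ (Fin d)) ℂ a) {G : ℝ → ℝ} {K : ℝ≥0}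
    (hG : ∀ r, 0 ≤ r → |G r| ≤ K * (r ^ 2 + r ^ a)) :
    ∃ Q : ℝ≥0, ∀ g : EuclideanSpace ℝ (Fin d) → ℂ, ContDiff ℝ 1 g →
      (Integrable fun x => ‖g x‖ ^ 2 + ∑ i, ‖fderiv ℝ g x (EuclideanSpace.single i 1)‖ ^ 2) →
      H1norm g ≤ 1 → |∫ x, G ‖g x‖| ≤ Q * H1norm g ^ 2 := by
  obtain ⟨S, hS⟩ := h.exists_lintegral_le (by linarith)
  refine ⟨K * (1 + S), fun g hg hg_int hg_le => ?_⟩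
  set h := ENNReal.ofReal (H1norm g ^ 2)
  have hg_meas : Measurable fun x => ‖g x‖ₑ ^ 2 := hg.continuous.enorm.measurable.pow_const 2
  have heH1 : eH1NormSq g ≤ h := eH1NormSq_le_ofReal_H1norm_sq hg_int
  have hh : h ≤ 1 := ENNReal.ofReal_le_one.2 (pow_le_one₀ (Real.sqrt_nonneg _) hg_le)
  have hG_le (x : EuclideanSpace ℝ (Fin d)) :
      ‖G ‖g x‖‖ₑ ≤ K * (‖g x‖ₑ ^ 2 + ‖g x‖ₑ ^ a) := by
    have ha0 : 0 ≤ a := by linarith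
    rw [← ofReal_norm, ← ofReal_norm, ← ENNReal.ofReal_pow (norm_nonneg _),
      ENNReal.ofReal_rpow_of_nonneg (norm_nonneg _) ha0,
      ← ENNReal.ofReal_add (by positivity) (by positivity), ← ENNReal.ofReal_coe_nnreal,
      ← ENNReal.ofReal_mul K.coe_nonneg]
    exact ENNReal.ofReal_le_ofReal (hG _ (norm_nonneg _))
  have hint : ‖∫ x, G ‖g x‖‖ₑ ≤ (K * (1 + S) : ℝ≥0) * h := by
    calc ‖∫ x, G ‖g x‖‖ₑ ≤ ∫⁻ x, ‖G ‖g x‖‖ₑ := enorm_integral_le_lintegral_enorm _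
      _ ≤ ∫⁻ x, K * (‖g x‖ₑ ^ 2 + ‖g x‖ₑ ^ a) := lintegral_mono hG_le
      _ = K * ((∫⁻ x, ‖g x‖ₑ ^ 2) + ∫⁻ x, ‖g x‖ₑ ^ a) := by
          rw [lintegral_const_mul' _ _ ENNReal.coe_ne_top, lintegral_add_left hg_meas]
      _ ≤ K * (h + S * h ^ (a / 2)) := by
          grw [lintegral_enorm_sq_le_eH1NormSq, hS g hg, heH1]
      _ ≤ K * (h + S * h) := by
          grw [ENNReal.rpow_le_self_of_le_one hh (by linarith)]
      _ = (K * (1 + S) : ℝ≥0) * h := by push_cast; ring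
  rwa [← ENNReal.ofReal_coe_nnreal, ← ENNReal.ofReal_mul (NNReal.coe_nonneg _), ← ofReal_norm,
    ENNReal.ofReal_le_ofReal_iff (by positivity)] at hint

end Potential

section SpaceTime

open Module Set
open scoped RealInnerProductSpace

variable {E F G : Type*} [NormedAddCommGroup E] [NormedAddCommGroup F] [NormedAddCommGroup G]
  {s : Set ℝ}

/-- A continuous function on space-time that, uniformly for times in `s`, decays in space faster
than every power. -/
structure RapidDecayOn (s : Set ℝ) (V : ℝ × E → F) : Prop where
  continuous : Continuous V
  exists_le (N : ℕ) : ∃ C, ∀ t ∈ s, ∀ x, (1 + ‖x‖) ^ N * ‖V (t, x)‖ ≤ C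

namespace RapidDecayOn

variable {V : ℝ × E → F}

lemma of_norm_le {W : ℝ × E → G} (hV : RapidDecayOn s V) (hW : Continuous W) {K : ℝ}
    (h : ∀ t ∈ s, ∀ x, ‖W (t, x)‖ ≤ K * ‖V (t, x)‖) : RapidDecayOn s W where
  continuous := hW
  exists_le N := by
    obtain ⟨C, hC⟩ := hV.exists_le N
    refine ⟨|K| * C, fun t ht x => ?_⟩
    calc (1 + ‖x‖) ^ N * ‖W (t, x)‖ ≤ (1 + ‖x‖) ^ N * (|K| * ‖V (t, x)‖) := by
          gcongr
          exact (h t ht x).trans (by gcongr; exact le_abs_self K)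
      _ = |K| * ((1 + ‖x‖) ^ N * ‖V (t, x)‖) := by ring
      _ ≤ |K| * C := by gcongr; exact hC t ht x

lemma exists_norm_le (hV : RapidDecayOn s V) : ∃ M, ∀ t ∈ s, ∀ x, ‖V (t, x)‖ ≤ M := by
  simpa using hV.exists_le 0

lemma prodMk {W : ℝ × E → G} (hV : RapidDecayOn s V) (hW : RapidDecayOn s W) :
    RapidDecayOn s fun p => (V p, W p) where
  continuous := hV.continuous.prodMk hW.continuous
  exists_le N := by
    obtain ⟨C, hC⟩ := hV.exists_le N
    obtain ⟨D, hD⟩ := hW.exists_le N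
    refine ⟨max C D, fun t ht x => ?_⟩
    rw [Prod.norm_mk, mul_max_of_nonneg _ _ (by positivity)]
    exact max_le_max (hC t ht x) (hD t ht x)

lemma pi {ι : Type*} [Fintype ι] {V : ι → ℝ × E → F} (hV : ∀ i, RapidDecayOn s (V i)) :
    RapidDecayOn s fun p i => V i p where
  continuous := continuous_pi fun i => (hV i).continuous
  exists_le N := by
    choose C hC using fun i => (hV i).exists_le N
    refine ⟨∑ i, |C i|, fun t ht x => ?_⟩
    rw [← le_div_iff₀' (by positivity), pi_norm_le_iff_of_nonneg (by positivity)]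
    intro i
    rw [le_div_iff₀' (by positivity)]
    exact (hC i t ht x).trans <| (le_abs_self _).trans <|
      Finset.single_le_sum (fun j _ => abs_nonneg (C j)) (Finset.mem_univ i)

lemma comp [NormedSpace ℝ F] [NormedSpace ℝ G] [ProperSpace F] (hV : RapidDecayOn s V)
    {f : F → G} (hf : ContDiff ℝ 1 f) (hf0 : f 0 = 0) : RapidDecayOn s fun p => f (V p) := by
  obtain ⟨M, hM⟩ := hV.exists_norm_le
  obtain ⟨L, hL⟩ := (isCompact_closedBall (0 : F) M).exists_bound_of_continuousOn
    (hf.continuous_fderiv one_ne_zero).continuousOn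
  refine hV.of_norm_le (hf.continuous.comp hV.continuous) (K := L) fun t ht x => ?_
  have hVM : V (t, x) ∈ Metric.closedBall 0 M := by simpa using hM t ht x
  have h0M : 0 ∈ Metric.closedBall (0 : F) M := by simpa using (norm_nonneg _).trans (hM t ht x)
  simpa [hf0] using (convex_closedBall (0 : F) M).norm_image_sub_le_of_norm_fderiv_le
    (fun z _ => hf.differentiable one_ne_zero z) hL h0M hVM

protected lemma inner [InnerProductSpace ℝ F] [ProperSpace F] {W : ℝ × E → F}
    (hV : RapidDecayOn s V) (hW : RapidDecayOn s W) : RapidDecayOn s fun p => ⟪V p, W p⟫ :=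
  (hV.prodMk hW).comp contDiff_inner (inner_zero_left 0)

variable [NormedSpace ℝ E] [FiniteDimensional ℝ E] [MeasurableSpace E] [BorelSpace E]
  {μ : Measure E} [μ.IsAddHaarMeasure]

lemma exists_integrable_bound (hV : RapidDecayOn s V) :
    ∃ w : E → ℝ, Integrable w μ ∧ ∀ t ∈ s, ∀ x, ‖V (t, x)‖ ≤ w x := by
  obtain ⟨C, hC⟩ := hV.exists_le (finrank ℝ E + 1)
  refine ⟨fun x => C * (1 + ‖x‖) ^ (-(finrank ℝ E + 1 : ℕ) : ℝ),
    (integrable_one_add_norm (by simp)).const_mul C, fun t ht x => ?_⟩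
  simp only [Real.rpow_neg (add_nonneg zero_le_one (norm_nonneg x)), Real.rpow_natCast]
  rw [← div_eq_mul_inv, le_div_iff₀' (by positivity)]
  exact hC t ht x

lemma integrable (hV : RapidDecayOn s V) {t : ℝ} (ht : t ∈ s) :
    Integrable (fun x => V (t, x)) μ := by
  obtain ⟨w, hw, hVw⟩ := hV.exists_integrable_bound (μ := μ)
  exact hw.mono' (hV.continuous.comp (by fun_prop)).aestronglyMeasurable (.of_forall (hVw t ht))

lemma integrable_prod (hV : RapidDecayOn s V) {a b : ℝ} (hs : uIcc a b ⊆ s) :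
    Integrable V ((volume.restrict (uIoc a b)).prod μ) := by
  obtain ⟨w, hw, hVw⟩ := hV.exists_integrable_bound (μ := μ)
  have hone : Integrable (fun _ => (1 : ℝ)) (volume.restrict (uIoc a b)) :=
    integrableOn_const (by simp [uIoc])
  refine (hone.mul_prod hw).mono' hV.continuous.aestronglyMeasurable ?_
  have hprod : (volume.restrict (uIoc a b)).prod μ
      = (volume.prod μ).restrict (uIoc a b ×ˢ univ) := by
    rw [← Measure.prod_restrict, Measure.restrict_univ]
  rw [hprod]
  refine ae_restrict_of_forall_mem (measurableSet_uIoc.prod .univ) fun p hp => ?_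
  simpa using hVw p.1 (hs (uIoc_subset_uIcc hp.1)) p.2

lemma integral_eq_of_integral_deriv_eq_zero [NormedSpace ℝ F] [CompleteSpace F] {V' : ℝ × E → F}
    (hV : RapidDecayOn s V) (hV' : RapidDecayOn s V')
    (hderiv : ∀ t ∈ s, ∀ x, HasDerivAt (fun r => V (r, x)) (V' (t, x)) t)
    (hzero : ∀ t ∈ s, ∫ x, V' (t, x) ∂μ = 0) {a b : ℝ} (hs : uIcc a b ⊆ s) :
    ∫ x, V (b, x) ∂μ = ∫ x, V (a, x) ∂μ := by
  have hftc (x : E) : ∫ t in a..b, V' (t, x) = V (b, x) - V (a, x) :=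
    intervalIntegral.integral_eq_sub_of_hasDerivAt (fun t ht => hderiv t (hs ht) x)
      ((hV'.continuous.comp (by fun_prop)).intervalIntegrable _ _)
  rw [← sub_eq_zero, ← integral_sub (hV.integrable (hs right_mem_uIcc))
    (hV.integrable (hs left_mem_uIcc))]
  calc ∫ x, (V (b, x) - V (a, x)) ∂μ = ∫ x, (∫ t in a..b, V' (t, x)) ∂μ := by simp only [hftc]
    _ = ∫ t in a..b, (∫ x, V' (t, x) ∂μ) :=
      (intervalIntegral_integral_swap (f := fun t x => V' (t, x)) (hV'.integrable_prod hs)).symm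
    _ = 0 := intervalIntegral.integral_zero_ae (.of_forall fun t ht =>
      hzero t (hs (uIoc_subset_uIcc ht)))

end RapidDecayOn

variable [NormedSpace ℝ E] [NormedSpace ℝ F] [NormedSpace ℝ G]

/-- The derivative of a function on space-time `ℝ × E` in the spatial direction `e`. -/
noncomputable def spaceDeriv (e : E) (V : ℝ × E → F) (p : ℝ × E) : F := fderiv ℝ V p (0, e)

/-- The time derivative of a function on space-time `ℝ × E`. -/
noncomputable def timeDeriv (V : ℝ × E → F) (p : ℝ × E) : F := fderiv ℝ V p (1, 0)

section Slices

variable {V : ℝ × E → F} {t : ℝ} {x : E}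

lemma hasFDerivAt_slice (hV : DifferentiableAt ℝ V (t, x)) :
    HasFDerivAt (fun y => V (t, y)) ((fderiv ℝ V (t, x)).comp (.inr ℝ ℝ E)) x :=
  hV.hasFDerivAt.comp x (hasFDerivAt_prodMk_right t x)

lemma fderiv_slice_apply (hV : DifferentiableAt ℝ V (t, x)) (e : E) :
    fderiv ℝ (fun y => V (t, y)) x e = spaceDeriv e V (t, x) := by
  simp [(hasFDerivAt_slice hV).fderiv, spaceDeriv]

lemma hasLineDerivAt_slice (hV : DifferentiableAt ℝ V (t, x)) (e : E) :
    HasLineDerivAt ℝ (fun y => V (t, y)) (spaceDeriv e V (t, x)) x e := by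
  simpa [spaceDeriv] using (hasFDerivAt_slice hV).hasLineDerivAt e

lemma hasDerivAt_timeDeriv (hV : DifferentiableAt ℝ V (t, x)) :
    HasDerivAt (fun s => V (s, x)) (timeDeriv V (t, x)) t :=
  hV.hasFDerivAt.comp_hasDerivAt t ((hasDerivAt_id t).prodMk (hasDerivAt_const t x))

end Slices

lemma contDiff_spaceDeriv {V : ℝ × E → F} {m n : WithTop ℕ∞} (hV : ContDiff ℝ n V)
    (hmn : m + 1 ≤ n) (e : E) : ContDiff ℝ m (spaceDeriv e V) :=
  (hV.fderiv_right hmn).clm_apply contDiff_const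

lemma contDiff_timeDeriv {V : ℝ × E → F} {m n : WithTop ℕ∞} (hV : ContDiff ℝ n V)
    (hmn : m + 1 ≤ n) : ContDiff ℝ m (timeDeriv V) :=
  (hV.fderiv_right hmn).clm_apply contDiff_const

lemma timeDeriv_spaceDeriv_comm {V : ℝ × E → F} (hV : ContDiff ℝ 2 V) (e : E) :
    timeDeriv (spaceDeriv e V) = spaceDeriv e (timeDeriv V) := by
  ext p
  have hfderiv : DifferentiableAt ℝ (fderiv ℝ V) p :=
    (hV.fderiv_right (m := 1) (by norm_num)).differentiable one_ne_zero p
  have hsymm : IsSymmSndFDerivAt ℝ V p := hV.contDiffAt.isSymmSndFDerivAt (by simp)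
  have hderiv (v w : ℝ × E) :
      fderiv ℝ (fun q => fderiv ℝ V q v) p w = fderiv ℝ (fderiv ℝ V) p w v := by
    rw [fderiv_clm_apply hfderiv (differentiableAt_const v)]
    simp
  exact (hderiv _ _).trans ((hsymm (1, 0) (0, e)).trans (hderiv _ _).symm)

/-- A `C¹` function on space-time that decays rapidly, along with its first spatial derivatives;
nothing is required of the time derivative. -/
structure RapidDecayC1On (s : Set ℝ) (V : ℝ × E → F) : Prop where
  contDiff : ContDiff ℝ 1 V
  rapidDecay : RapidDecayOn s V
  rapidDecay_spaceDeriv (e : E) : RapidDecayOn s (spaceDeriv e V)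

/-- A smooth function on space-time that is a Schwartz function of the space variable, uniformly
for times in `s`. -/
structure UniformSchwartzOn (s : Set ℝ) (V : ℝ × E → F) : Prop where
  contDiff : ContDiff ℝ (⊤ : ℕ∞) V
  exists_le (n N : ℕ) :
    ∃ C, ∀ t ∈ s, ∀ x, (1 + ‖x‖) ^ N * ‖iteratedFDeriv ℝ n (fun y => V (t, y)) x‖ ≤ C

namespace RapidDecayC1On

variable {V : ℝ × E → F}

lemma prodMk {W : ℝ × E → G} (hV : RapidDecayC1On s V) (hW : RapidDecayC1On s W) :
    RapidDecayC1On s fun p => (V p, W p) where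
  contDiff := hV.contDiff.prodMk hW.contDiff
  rapidDecay := hV.rapidDecay.prodMk hW.rapidDecay
  rapidDecay_spaceDeriv e := by
    have hderiv : spaceDeriv e (fun p => (V p, W p)) =
        fun p => (spaceDeriv e V p, spaceDeriv e W p) := by
      ext1 p
      simp [spaceDeriv, (hV.contDiff.differentiable one_ne_zero p).fderiv_prodMk
        (hW.contDiff.differentiable one_ne_zero p)]
    exact hderiv ▸ (hV.rapidDecay_spaceDeriv e).prodMk (hW.rapidDecay_spaceDeriv e)

lemma pi {ι : Type*} [Fintype ι] {V : ι → ℝ × E → F} (hV : ∀ i, RapidDecayC1On s (V i)) :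
    RapidDecayC1On s fun p i => V i p where
  contDiff := contDiff_pi.2 fun i => (hV i).contDiff
  rapidDecay := .pi fun i => (hV i).rapidDecay
  rapidDecay_spaceDeriv e := by
    have hderiv : spaceDeriv e (fun p i => V i p) = fun p i => spaceDeriv e (V i) p := by
      ext p i
      simp [spaceDeriv, fderiv_pi fun i => (hV i).contDiff.differentiable one_ne_zero p]
    exact hderiv ▸ .pi fun i => (hV i).rapidDecay_spaceDeriv e

lemma comp [FiniteDimensional ℝ F] (hV : RapidDecayC1On s V) {f : F → G} (hf : ContDiff ℝ 1 f)
    (hf0 : f 0 = 0) : RapidDecayC1On s fun p => f (V p) where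
  contDiff := hf.comp hV.contDiff
  rapidDecay := hV.rapidDecay.comp hf hf0
  rapidDecay_spaceDeriv e := by
    have hfderiv : Continuous (fderiv ℝ f) := hf.continuous_fderiv one_ne_zero
    obtain ⟨M, hM⟩ := hV.rapidDecay.exists_norm_le
    obtain ⟨L, hL⟩ := (isCompact_closedBall (0 : F) M).exists_bound_of_continuousOn
      hfderiv.continuousOn
    have hderiv : spaceDeriv e (fun p => f (V p)) =
        fun p => fderiv ℝ f (V p) (spaceDeriv e V p) := by
      ext1 p
      rw [spaceDeriv, fderiv_fun_comp p (hf.differentiable one_ne_zero (V p))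
        (hV.contDiff.differentiable one_ne_zero p)]
      rfl
    rw [hderiv]
    refine (hV.rapidDecay_spaceDeriv e).of_norm_le
      ((hfderiv.comp hV.contDiff.continuous).clm_apply
        (hV.rapidDecay_spaceDeriv e).continuous) (K := L) fun t ht x => ?_
    exact (fderiv ℝ f (V (t, x))).le_of_opNorm_le (hL _ (by simpa using hM t ht x)) _

lemma congr {W : ℝ × E → F} (hV : RapidDecayC1On s V) (hW : ContDiff ℝ 1 W)
    (h : ∀ t ∈ s, ∀ x, W (t, x) = V (t, x)) : RapidDecayC1On s W where
  contDiff := hW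
  rapidDecay := hV.rapidDecay.of_norm_le hW.continuous (K := 1) fun t ht x => by
    rw [h t ht x, one_mul]
  rapidDecay_spaceDeriv e := by
    refine (hV.rapidDecay_spaceDeriv e).of_norm_le
      (contDiff_spaceDeriv hW (m := 0) (by simp) e).continuous (K := 1) fun t ht x => ?_
    rw [← fderiv_slice_apply (hV.contDiff.differentiable one_ne_zero _),
      ← fderiv_slice_apply (hW.differentiable one_ne_zero _), one_mul, funext (h t ht)]

end RapidDecayC1On

namespace UniformSchwartzOn

variable {V : ℝ × E → F}

lemma rapidDecay (hV : UniformSchwartzOn s V) : RapidDecayOn s V where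
  continuous := hV.contDiff.continuous
  exists_le N := by simpa using hV.exists_le 0 N

protected lemma spaceDeriv (hV : UniformSchwartzOn s V) (e : E) :
    UniformSchwartzOn s (spaceDeriv e V) where
  contDiff := contDiff_spaceDeriv hV.contDiff (by simp) e
  exists_le n N := by
    obtain ⟨C, hC⟩ := hV.exists_le (n + 1) N
    refine ⟨‖e‖ * C, fun t ht x => ?_⟩
    have hslice : ContDiff ℝ (⊤ : ℕ∞) (fderiv ℝ fun y => V (t, y)) :=
      (hV.contDiff.comp (contDiff_prodMk_right t)).fderiv_right (by simp)
    have hderiv : (fun y => spaceDeriv e V (t, y)) =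
        fun y => fderiv ℝ (fun z => V (t, z)) y e :=
      funext fun y => (fderiv_slice_apply (hV.contDiff.differentiable (by simp) _) e).symm
    calc (1 + ‖x‖) ^ N * ‖iteratedFDeriv ℝ n (fun y => spaceDeriv e V (t, y)) x‖
        ≤ (1 + ‖x‖) ^ N * (‖e‖ * ‖iteratedFDeriv ℝ n (fderiv ℝ fun y => V (t, y)) x‖) := by
          rw [hderiv]
          gcongr
          exact norm_iteratedFDeriv_clm_apply_const hslice.contDiffAt (mod_cast le_top)
      _ = ‖e‖ * ((1 + ‖x‖) ^ N * ‖iteratedFDeriv ℝ (n + 1) (fun y => V (t, y)) x‖) := by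
          rw [norm_iteratedFDeriv_fderiv]
          ring
      _ ≤ ‖e‖ * C := by gcongr; exact hC t ht x

lemma rapidDecayC1 (hV : UniformSchwartzOn s V) : RapidDecayC1On s V where
  contDiff := hV.contDiff.of_le (mod_cast le_top)
  rapidDecay := hV.rapidDecay
  rapidDecay_spaceDeriv e := (hV.spaceDeriv e).rapidDecay

end UniformSchwartzOn

section IntegrationByParts

variable {H : Type*} [NormedAddCommGroup H] [InnerProductSpace ℝ H] [FiniteDimensional ℝ H]

variable [FiniteDimensional ℝ E] [MeasurableSpace E] [BorelSpace E] {μ : Measure E}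
  [μ.IsAddHaarMeasure]

lemma RapidDecayC1On.integral_inner_spaceDeriv {V W : ℝ × E → H} (hV : RapidDecayC1On s V)
    (hW : RapidDecayC1On s W) (e : E) {t : ℝ} (ht : t ∈ s) :
    ∫ x, ⟪V (t, x), spaceDeriv e W (t, x)⟫ ∂μ = -∫ x, ⟪spaceDeriv e V (t, x), W (t, x)⟫ ∂μ :=
  integral_bilinear_hasLineDerivAt_right_eq_neg_left_of_integrable (B := innerSL ℝ)
    (((hV.rapidDecay_spaceDeriv e).inner hW.rapidDecay).integrable ht)
    ((hV.rapidDecay.inner (hW.rapidDecay_spaceDeriv e)).integrable ht)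
    ((hV.rapidDecay.inner hW.rapidDecay).integrable ht)
    (fun _ _ => hasLineDerivAt_slice (hV.contDiff.differentiable one_ne_zero _) e)
    (fun _ _ => hasLineDerivAt_slice (hW.contDiff.differentiable one_ne_zero _) e)

lemma RapidDecayC1On.integral_inner_sum_spaceDeriv {ι : Type*} [Fintype ι] {V : ℝ × E → H}
    {W : ι → ℝ × E → H} (hV : RapidDecayC1On s V) (hW : ∀ i, RapidDecayC1On s (W i)) (e : ι → E)
    {t : ℝ} (ht : t ∈ s) :
    ∫ x, ⟪V (t, x), ∑ i, spaceDeriv (e i) (W i) (t, x)⟫ ∂μ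
      = -∫ x, ∑ i, ⟪spaceDeriv (e i) V (t, x), W i (t, x)⟫ ∂μ := by
  simp only [inner_sum]
  rw [integral_finsetSum, integral_finsetSum, ← Finset.sum_neg_distrib]
  · exact Finset.sum_congr rfl fun i _ => hV.integral_inner_spaceDeriv (hW i) (e i) ht
  · exact fun i _ => ((hV.rapidDecay_spaceDeriv _).inner (hW i).rapidDecay).integrable ht
  · exact fun i _ => (hV.rapidDecay.inner ((hW i).rapidDecay_spaceDeriv _)).integrable ht

end IntegrationByParts

end SpaceTime

section Conservation

open Set
open scoped RealInnerProductSpace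

variable {d : ℕ}

local notation:max "∂ₓ" i:max => spaceDeriv (EuclideanSpace.single i (1 : ℝ))

/-- The mass `∫ |g|²`, the first conserved quantity of the NLS. -/
noncomputable def mass (g : EuclideanSpace ℝ (Fin d) → ℂ) : ℝ := ∫ x, ‖g x‖ ^ 2

/-- Twice the energy `∫ (|∇g|² + B(|g|²)) / 2`, the second conserved quantity of the NLS with
nonlinearity `β = B'`. -/
noncomputable def energy (B : ℝ → ℝ) (g : EuclideanSpace ℝ (Fin d) → ℂ) : ℝ :=
  ∫ x, (∑ i, ‖fderiv ℝ g x (EuclideanSpace.single i 1)‖ ^ 2 + B (‖g x‖ ^ 2))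

lemma inner_I_mul_self (z : ℂ) : ⟪Complex.I * z, z⟫ = 0 := by
  simp [Complex.inner, mul_comm]

lemma inner_I_mul_I_mul (z w : ℂ) : ⟪Complex.I * z, Complex.I * w⟫ = ⟪z, w⟫ := by
  simp [Complex.inner, add_comm]

lemma contDiff_smul_comp_norm_sq {β : ℝ → ℝ} {n : WithTop ℕ∞} (hβ : ContDiff ℝ n β) :
    ContDiff ℝ n fun z : ℂ => β (‖z‖ ^ 2) • z :=
  (hβ.comp (contDiff_norm_sq ℝ)).smul contDiff_id

lemma contDiff_one_of_forall_hasDerivAt {β B : ℝ → ℝ} (hβ : Continuous β)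
    (hB : ∀ t, HasDerivAt B (β t) t) : ContDiff ℝ 1 B := by
  rw [contDiff_one_iff_deriv, funext fun t => (hB t).deriv]
  exact ⟨fun t => (hB t).differentiableAt, hβ⟩

lemma lap_slice_eq_sum {F : Type*} [NormedAddCommGroup F] [NormedSpace ℝ F]
    {V : ℝ × EuclideanSpace ℝ (Fin d) → F} (hV : ContDiff ℝ 2 V) (t : ℝ)
    (x : EuclideanSpace ℝ (Fin d)) : lap (fun y => V (t, y)) x = ∑ i, ∂ₓ i (∂ₓ i V) (t, x) := by
  refine Finset.sum_congr rfl fun i _ => ?_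
  simp only [fderiv_slice_apply (hV.differentiable two_ne_zero _)]
  exact fderiv_slice_apply ((contDiff_spaceDeriv hV (m := 1) (by norm_num) _).differentiable
    one_ne_zero _) _

namespace IsClassicalSolution

variable {β B : ℝ → ℝ} {u : ℝ → EuclideanSpace ℝ (Fin d) → ℂ} (hu : IsClassicalSolution β u)
include hu

local notation "U" => Function.uncurry u

lemma uniformSchwartzOn (T : ℝ) : UniformSchwartzOn (Icc 0 T) U where
  contDiff := hu.smooth
  exists_le n N := by
    obtain ⟨C, hC⟩ := hu.decay (max T 1) (by positivity) n N
    exact ⟨C, fun t ht => hC t ⟨ht.1, ht.2.trans (le_max_left T 1)⟩⟩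

lemma contDiff_uncurry (n : ℕ) : ContDiff ℝ n U := hu.smooth.of_le (mod_cast le_top)

lemma I_mul_timeDeriv {t : ℝ} (ht : 0 ≤ t) (x : EuclideanSpace ℝ (Fin d)) :
    Complex.I * timeDeriv U (t, x) = β (‖u t x‖ ^ 2) • u t x - ∑ i, ∂ₓ i (∂ₓ i U) (t, x) := by
  have heqn := hu.eqn t ht x
  have hlap : lap (u t) x = _ := lap_slice_eq_sum (hu.contDiff_uncurry 2) t x
  have htime : deriv (fun s => u s x) t = timeDeriv U (t, x) :=
    (hasDerivAt_timeDeriv ((hu.contDiff_uncurry 1).differentiable one_ne_zero _)).deriv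
  rw [← htime, heqn, hlap, Complex.real_smul, neg_add_eq_sub]

lemma fderiv_apply_single (t : ℝ) (x : EuclideanSpace ℝ (Fin d)) (i : Fin d) :
    fderiv ℝ (u t) x (EuclideanSpace.single i 1) = ∂ₓ i U (t, x) :=
  fderiv_slice_apply ((hu.contDiff_uncurry 1).differentiable one_ne_zero _) _

lemma rapidDecayC1_spaceDeriv (T : ℝ) (i : Fin d) : RapidDecayC1On (Icc 0 T) (∂ₓ i U) :=
  ((hu.uniformSchwartzOn T).spaceDeriv _).rapidDecayC1

lemma rapidDecayC1_timeDeriv (hβ : ContDiff ℝ 1 β) (T : ℝ) :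
    RapidDecayC1On (Icc 0 T) (timeDeriv U) := by
  have hU := hu.uniformSchwartzOn T
  have hlap_U := RapidDecayC1On.pi fun i => (hU.spaceDeriv (EuclideanSpace.single i 1)).spaceDeriv
    (EuclideanSpace.single i 1) |>.rapidDecayC1
  have hrhs := (hlap_U.prodMk hU.rapidDecayC1).comp
    (f := fun z => Complex.I * (∑ i, z.1 i - β (‖z.2‖ ^ 2) • z.2))
    (contDiff_const.mul ((ContDiff.sum fun i _ => by fun_prop).sub
      ((contDiff_smul_comp_norm_sq hβ).comp contDiff_snd))) (by simp)
  refine hrhs.congr (contDiff_timeDeriv (hu.contDiff_uncurry 2) (by norm_num)) fun t ht x => ?_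
  simp only [Function.uncurry_apply_pair]
  linear_combination (-Complex.I) * hu.I_mul_timeDeriv ht.1 x + timeDeriv U (t, x) * Complex.I_mul_I

lemma integral_inner_laplacian {V : ℝ × EuclideanSpace ℝ (Fin d) → ℂ} {T t : ℝ}
    (hV : RapidDecayC1On (Icc 0 T) V) (ht : t ∈ Icc 0 T) :
    ∫ x, ⟪V (t, x), ∑ i, ∂ₓ i (∂ₓ i U) (t, x)⟫ = -∫ x, ∑ i, ⟪∂ₓ i V (t, x), ∂ₓ i U (t, x)⟫ :=
  hV.integral_inner_sum_spaceDeriv (hu.rapidDecayC1_spaceDeriv T) _ ht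

lemma integral_inner_timeDeriv {t : ℝ} (ht : 0 ≤ t) :
    ∫ x, ⟪u t x, timeDeriv U (t, x)⟫ = 0 := by
  have hU := (hu.uniformSchwartzOn t).rapidDecayC1
  have hIU : RapidDecayC1On (Icc 0 t) fun p => Complex.I * U p :=
    hU.comp (contDiff_const.mul contDiff_id) (mul_zero _)
  have hderiv (i : Fin d) (p) : ∂ₓ i (fun q => Complex.I * U q) p = Complex.I * ∂ₓ i U p := by
    simp [spaceDeriv, fderiv_const_mul (hU.contDiff.differentiable one_ne_zero p)]
  calc ∫ x, ⟪u t x, timeDeriv U (t, x)⟫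
      = ∫ x, -⟪Complex.I * u t x, ∑ i, ∂ₓ i (∂ₓ i U) (t, x)⟫ := by
        congr with x
        rw [← inner_I_mul_I_mul, hu.I_mul_timeDeriv ht, inner_sub_right, inner_smul_right,
          inner_I_mul_self, mul_zero, zero_sub]
    _ = ∫ x, ∑ i, ⟪∂ₓ i (fun q => Complex.I * U q) (t, x), ∂ₓ i U (t, x)⟫ := by
        rw [integral_neg, neg_eq_iff_eq_neg]
        exact hu.integral_inner_laplacian hIU ⟨ht, le_rfl⟩
    _ = 0 := by simp only [hderiv, inner_I_mul_self, Finset.sum_const_zero, integral_zero]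

lemma inner_timeDeriv_smul {t : ℝ} (ht : 0 ≤ t) (x : EuclideanSpace ℝ (Fin d)) :
    ⟪timeDeriv U (t, x), β (‖u t x‖ ^ 2) • u t x⟫
      = ⟪timeDeriv U (t, x), ∑ i, ∂ₓ i (∂ₓ i U) (t, x)⟫ := by
  rw [← sub_eq_zero, ← inner_sub_right, ← hu.I_mul_timeDeriv ht, real_inner_comm,
    inner_I_mul_self]

lemma mass_eq (hβ : ContDiff ℝ 1 β) {t : ℝ} (ht : 0 ≤ t) : mass (u t) = mass (u 0) := by
  have hU := (hu.uniformSchwartzOn t).rapidDecayC1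
  have hUt := (hu.rapidDecayC1_timeDeriv hβ t).rapidDecay
  refine (hU.rapidDecay.comp (contDiff_norm_sq ℝ) (by simp)).integral_eq_of_integral_deriv_eq_zero
    (V' := fun p => 2 * ⟪U p, timeDeriv U p⟫)
    ((hU.rapidDecay.inner hUt).comp (contDiff_const.mul contDiff_id) (mul_zero _))
    (fun s _ x => (hasDerivAt_timeDeriv (hU.contDiff.differentiable one_ne_zero _)).norm_sq)
    (fun s hs => ?_) (uIcc_of_le ht).subset
  rw [integral_const_mul, mul_eq_zero_iff_left two_ne_zero]
  exact hu.integral_inner_timeDeriv hs.1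

lemma hasDerivAt_energyDensity (hB : ∀ t, HasDerivAt B (β t) t) (t : ℝ)
    (x : EuclideanSpace ℝ (Fin d)) :
    HasDerivAt (fun s => ∑ i, ‖∂ₓ i U (s, x)‖ ^ 2 + B (‖u s x‖ ^ 2))
      (2 * (∑ i, ⟪∂ₓ i (timeDeriv U) (t, x), ∂ₓ i U (t, x)⟫
        + ⟪timeDeriv U (t, x), β (‖u t x‖ ^ 2) • u t x⟫)) t := by
  have hgrad (i : Fin d) : HasDerivAt (fun s => ‖∂ₓ i U (s, x)‖ ^ 2)
      (2 * ⟪∂ₓ i U (t, x), ∂ₓ i (timeDeriv U) (t, x)⟫) t := by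
    rw [← timeDeriv_spaceDeriv_comm (hu.contDiff_uncurry 2)]
    exact (hasDerivAt_timeDeriv ((contDiff_spaceDeriv (hu.contDiff_uncurry 2) (m := 1)
      (by norm_num) _).differentiable one_ne_zero _)).norm_sq
  have hpot : HasDerivAt (fun s => B (‖u s x‖ ^ 2)) _ t := (hB _).comp t
    (hasDerivAt_timeDeriv ((hu.contDiff_uncurry 1).differentiable one_ne_zero (t, x))).norm_sq
  refine ((HasDerivAt.fun_sum fun i _ => hgrad i).add hpot).congr_deriv ?_
  simp only [← Finset.mul_sum, inner_smul_right, real_inner_comm, Function.uncurry_apply_pair]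
  ring

lemma rapidDecay_kinetic (T : ℝ) :
    RapidDecayOn (Icc 0 T) fun p => ∑ i, ‖∂ₓ i U p‖ ^ 2 :=
  (RapidDecayOn.pi fun i => (hu.rapidDecayC1_spaceDeriv T i).rapidDecay).comp
    (ContDiff.sum fun i _ => (contDiff_apply ℝ ℂ i).norm_sq ℝ) (by simp)

lemma rapidDecay_potential (hB : ContDiff ℝ 1 B) (hB0 : B 0 = 0) (T : ℝ) :
    RapidDecayOn (Icc 0 T) fun p => B (‖U p‖ ^ 2) :=
  (hu.uniformSchwartzOn T).rapidDecay.comp (hB.comp (contDiff_norm_sq ℝ)) (by simpa)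

lemma energy_eq (hβ : ContDiff ℝ 1 β) (hB : ∀ t, HasDerivAt B (β t) t) (hB0 : B 0 = 0) {t : ℝ}
    (ht : 0 ≤ t) : energy B (u t) = energy B (u 0) := by
  have hUt := hu.rapidDecayC1_timeDeriv hβ t
  have hdensity := ((hu.rapidDecay_kinetic t).prodMk (hu.rapidDecay_potential
    (contDiff_one_of_forall_hasDerivAt hβ.continuous hB) hB0 t)).comp contDiff_add (add_zero 0)
  have hkin : RapidDecayOn (Icc 0 t) fun p => ∑ i, ⟪∂ₓ i (timeDeriv U) p, ∂ₓ i U p⟫ :=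
    (RapidDecayOn.pi fun i => (hUt.rapidDecay_spaceDeriv _).inner
      (hu.rapidDecayC1_spaceDeriv t i).rapidDecay).comp
      (ContDiff.sum fun i _ => contDiff_apply ℝ ℝ i) (by simp)
  have hpot : RapidDecayOn (Icc 0 t) fun p => ⟪timeDeriv U p, β (‖U p‖ ^ 2) • U p⟫ :=
    hUt.rapidDecay.inner ((hu.uniformSchwartzOn t).rapidDecay.comp (contDiff_smul_comp_norm_sq hβ)
      (smul_zero _))
  have hconserved := hdensity.integral_eq_of_integral_deriv_eq_zero (μ := volume)
    ((hkin.prodMk hpot).comp (f := fun r => 2 * (r.1 + r.2)) (by fun_prop) (by simp))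
    (fun s _ x => hu.hasDerivAt_energyDensity hB s x) (fun s hs => ?_) (uIcc_of_le ht).subset
  · simpa only [energy, hu.fderiv_apply_single, Function.uncurry_apply_pair] using hconserved
  rw [integral_const_mul, integral_add (hkin.integrable hs) (hpot.integrable hs),
    ← neg_eq_iff_eq_neg.2 (hu.integral_inner_laplacian hUt hs)]
  simp only [Function.uncurry_apply_pair, hu.inner_timeDeriv_smul hs.1, neg_add_cancel, mul_zero]

lemma integrable_norm_sq {t : ℝ} (ht : 0 ≤ t) : Integrable fun x => ‖u t x‖ ^ 2 :=
  ((hu.uniformSchwartzOn t).rapidDecay.comp (contDiff_norm_sq ℝ) (by simp)).integrable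
    ⟨ht, le_rfl⟩

lemma integrable_sum_norm_fderiv_sq {t : ℝ} (ht : 0 ≤ t) :
    Integrable fun x => ∑ i, ‖fderiv ℝ (u t) x (EuclideanSpace.single i 1)‖ ^ 2 := by
  simpa only [hu.fderiv_apply_single] using (hu.rapidDecay_kinetic t).integrable ⟨ht, le_rfl⟩

lemma integrable_potential (hB : ContDiff ℝ 1 B) (hB0 : B 0 = 0) {t : ℝ} (ht : 0 ≤ t) :
    Integrable fun x => B (‖u t x‖ ^ 2) :=
  (hu.rapidDecay_potential hB hB0 t).integrable ⟨ht, le_rfl⟩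

lemma mass_add_energy (hB : ContDiff ℝ 1 B) (hB0 : B 0 = 0) {t : ℝ} (ht : 0 ≤ t) :
    mass (u t) + energy B (u t) = H1norm (u t) ^ 2 + ∫ x, B (‖u t x‖ ^ 2) := by
  have hkin := hu.integrable_sum_norm_fderiv_sq ht
  rw [mass, energy, integral_add hkin (hu.integrable_potential hB hB0 ht), H1norm_sq,
    integral_add (hu.integrable_norm_sq ht) hkin, add_assoc]

lemma mass_le_H1norm_sq {t : ℝ} (ht : 0 ≤ t) : mass (u t) ≤ H1norm (u t) ^ 2 := by
  rw [H1norm_sq]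
  refine integral_mono (hu.integrable_norm_sq ht)
    ((hu.integrable_norm_sq ht).add (hu.integrable_sum_norm_fderiv_sq ht)) fun x => ?_
  exact le_add_of_nonneg_right (by positivity)

lemma H1norm_sq_le (hβ : ContDiff ℝ 1 β) (hB : ∀ t, HasDerivAt B (β t) t) (hB0 : B 0 = 0)
    {K : ℝ} (hBK : ∀ t, 0 ≤ t → -(K * t) ≤ B t) {t : ℝ} (ht : 0 ≤ t) :
    H1norm (u t) ^ 2 ≤ H1norm (u 0) ^ 2 + K * mass (u 0) + ∫ x, B (‖u 0 x‖ ^ 2) := by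
  have hB1 := contDiff_one_of_forall_hasDerivAt hβ.continuous hB
  have hpot : -(K * mass (u t)) ≤ ∫ x, B (‖u t x‖ ^ 2) := by
    rw [mass, ← integral_const_mul, ← integral_neg]
    exact integral_mono ((hu.integrable_norm_sq ht).const_mul K).neg
      (hu.integrable_potential hB1 hB0 ht) fun x => hBK _ (sq_nonneg _)
  have h0 := hu.mass_add_energy hB1 hB0 le_rfl
  have ht' := hu.mass_add_energy hB1 hB0 ht
  rw [hu.mass_eq hβ ht] at hpot ht'
  linarith [hu.energy_eq hβ hB hB0 ht]

end IsClassicalSolution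

end Conservation

section Stability

variable {d : ℕ} {β B : ℝ → ℝ} {p C K : ℝ}

lemma exists_H1norm_le_mul_of_isClassicalSolution (hd : 1 ≤ d) (hβ : ContDiff ℝ 1 β)
    (hp : 3 ≤ d → p ≤ ((d : ℝ) + 2) / ((d : ℝ) - 2))
    (hgrowth : ∀ t, 1 ≤ t → |β (t ^ 2) * t| ≤ C * t ^ p) (hB : ∀ t, HasDerivAt B (β t) t)
    (hB0 : B 0 = 0) (hBK : ∀ t, 0 ≤ t → -(K * t) ≤ B t) :
    ∃ A > 0, ∀ u : ℝ → EuclideanSpace ℝ (Fin d) → ℂ, IsClassicalSolution β u →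
      H1norm (u 0) ≤ 1 → ∀ t, 0 ≤ t → H1norm (u t) ≤ A * H1norm (u 0) := by
  obtain ⟨a, hpa, ha, hsobolev⟩ := exists_sobolevEmbedding hd hp
  obtain ⟨L, hL⟩ := exists_abs_le_one_add_rpow hβ.continuous hpa hgrowth
  obtain ⟨Q, hQ⟩ := hsobolev.exists_abs_integral_comp_norm_le ha (G := fun r => B (r ^ 2))
    fun r hr => abs_primitive_sq_le hB hB0 L.2 ha hL hr
  refine ⟨√(1 + Q + |K|), by positivity, fun u hu hu0 t ht => ?_⟩
  have hpot : ∫ x, B (‖u 0 x‖ ^ 2) ≤ Q * H1norm (u 0) ^ 2 :=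
    (le_abs_self _).trans <| hQ (u 0) ((hu.contDiff_uncurry 1).comp (contDiff_prodMk_right 0))
      ((hu.integrable_norm_sq le_rfl).add (hu.integrable_sum_norm_fderiv_sq le_rfl)) hu0
  have hmass : K * mass (u 0) ≤ |K| * H1norm (u 0) ^ 2 :=
    mul_le_mul (le_abs_self K) (hu.mass_le_H1norm_sq le_rfl)
      (integral_nonneg fun x => sq_nonneg _) (abs_nonneg K)
  refine le_of_sq_le_sq ?_ (mul_nonneg (Real.sqrt_nonneg _) (Real.sqrt_nonneg _))
  rw [mul_pow, Real.sq_sqrt (by positivity)]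
  linarith [hu.H1norm_sq_le hβ hB hB0 hBK ht]

theorem orbital_stability_of_zero_general (hd : 1 ≤ d) (hβ : ContDiff ℝ 1 β)
    (hp : 3 ≤ d → p ≤ ((d : ℝ) + 2) / ((d : ℝ) - 2))
    (hgrowth : ∀ t, 1 ≤ t → |β (t ^ 2) * t| ≤ C * t ^ p) (hB : ∀ t, HasDerivAt B (β t) t)
    (hB0 : B 0 = 0) (hBK : ∀ t, 0 ≤ t → -(K * t) ≤ B t) :
    ∀ ε > 0, ∃ δ > 0, ∀ u : ℝ → EuclideanSpace ℝ (Fin d) → ℂ, IsClassicalSolution β u →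
      H1norm (u 0) < δ → ∀ t, 0 ≤ t → H1norm (u t) < ε := by
  intro ε hε
  obtain ⟨A, hA, hbound⟩ :=
    exists_H1norm_le_mul_of_isClassicalSolution hd hβ hp hgrowth hB hB0 hBK
  refine ⟨min 1 (ε / A), by positivity, fun u hu hu0 t ht => ?_⟩
  obtain ⟨hu1, huA⟩ := lt_min_iff.1 hu0
  exact (hbound u hu hu1.le t ht).trans_lt ((lt_div_iff₀' hA).1 huA)

end Stability

/-- Orbital stability of the zero solution of the NLS when the primitive `B` of `β`
is nonnegative on `[0,∞)`. -/
theorem orbital_stability_of_zero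
    {d : ℕ} (hd : 1 ≤ d)
    -- β is smooth with β(0) = 0
    (β : ℝ → ℝ) (hβ : ContDiff ℝ (⊤ : ℕ∞) β) (hβ0 : β 0 = 0)
    -- growth condition with exponent p < d*
    (p : ℝ) (hp : 3 ≤ d → p < ((d : ℝ) + 2) / ((d : ℝ) - 2)) (C : ℕ → ℝ)
    (hgrowth : ∀ n : ℕ, ∀ t : ℝ, 1 ≤ t →
      |iteratedDeriv n (fun s => β (s ^ 2) * s) t| ≤ C n * t ^ (p - (n : ℝ)))
    -- B is the primitive of β with B(0) = 0, and B ≥ 0 on [0,∞)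
    (B : ℝ → ℝ) (hB : ∀ t, HasDerivAt B (β t) t) (hB0 : B 0 = 0)
    (hBnonneg : ∀ t : ℝ, 0 ≤ t → 0 ≤ B t) :
    -- conclusion: orbital stability of 0
    ∀ ε > 0, ∃ δ > 0, ∀ u : ℝ → EuclideanSpace ℝ (Fin d) → ℂ,
      IsClassicalSolution β u →
      H1norm (u 0) < δ →
      ∀ t : ℝ, 0 ≤ t → H1norm (u t) < ε := by
  refine orbital_stability_of_zero_general (C := C 0) (K := 0) hd (hβ.of_le (mod_cast le_top))
    (fun h => (hp h).le) (fun t ht => ?_) hB hB0 fun t ht => by simpa using hBnonneg t ht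
  simpa only [iteratedDeriv_zero, Nat.cast_zero, sub_zero] using hgrowth 0 t ht
end

section
/- Let d ≥ 1, ω ∈ ℝ, and let β : ℝ → ℝ be C^∞. If φ : ℝ^d → ℝ is a twice continuously differentiable function satisfying Δφ(x) = ωφ(x) + β(φ(x)²)φ(x) for all x ∈ ℝ^d, then φ is C^∞ on ℝ^d. -/
/-!
Write `ρ` for `radialDensity` and `Ψ` for `radialBump`, two radial functions supported in the unit
ball with `∇Ψ(y) = -ρ(y) y`. Integrating `φ(x) - φ(x - y) = ∫₀¹ Dφ(x - ty) y dt` against `ρ` and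
then integrating by parts in `y` gives
`(∫ ρ) φ(x) = (ρ ⋆ φ)(x) - ∫₀¹ t ∫ Ψ(y) Δφ(x - ty) dy dt`.
The first term is smooth. The second is one derivative smoother than `Δφ`: a derivative in `x` can
be moved onto `Ψ` at the cost of a factor `t⁻¹`, which the weight `t` absorbs. So `φ` is `C^(n+1)`
whenever `Δφ` is `C^n` with `n ≥ 1`, and the equation `Δφ = G(x, φ)` bootstraps this to full
smoothness.
-/

open ContinuousLinearMap Function InnerProductSpace Laplacian MeasureTheory Metric Set
open scoped Convolution

section Integrals

variable {X Y F H : Type*} [NormedAddCommGroup F] [NormedSpace ℝ F]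

theorem hasFDerivAt_setIntegral_of_continuous [TopologicalSpace X] [T2Space X] [MeasurableSpace X]
    [BorelSpace X] {μ : Measure X} [IsFiniteMeasureOnCompacts μ] [NormedAddCommGroup H]
    [NormedSpace ℝ H] [ProperSpace H] {K : Set X} (hK : IsCompact K) {f : H → X → F}
    {f' : H → X → H →L[ℝ] F} (hf : ∀ x, Continuous (f x)) (hf' : Continuous (uncurry f'))
    (hff' : ∀ x p, HasFDerivAt (f · p) (f' x p) x) (x : H) :
    HasFDerivAt (fun x ↦ ∫ p in K, f x p ∂μ) (∫ p in K, f' x p ∂μ) x := by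
  obtain ⟨C, hC⟩ := ((isCompact_closedBall x 1).prod hK).exists_bound_of_continuousOn
    hf'.continuousOn
  have hf'x : Continuous (f' x) := hf'.comp (by fun_prop : Continuous fun p ↦ (x, p))
  refine hasFDerivAt_integral_of_dominated_of_fderiv_le (bound := fun _ ↦ C)
    (closedBall_mem_nhds x one_pos) (.of_forall fun y ↦ ?_)
    ((hf x).continuousOn.integrableOn_compact hK) ?_ ?_ (integrableOn_const hK.measure_ne_top)
    (.of_forall fun p y _ ↦ hff' y p)
  · exact (hf y).continuousOn.aestronglyMeasurable_of_isCompact hK hK.measurableSet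
  · exact hf'x.continuousOn.aestronglyMeasurable_of_isCompact hK hK.measurableSet
  · exact ae_restrict_of_forall_mem hK.measurableSet fun p hp y hy ↦ hC (y, p) ⟨hy, hp⟩

variable [MeasurableSpace X] [MeasurableSpace Y] {μ : Measure X} {ν : Measure Y} [SFinite μ]
  [SFinite ν] {f : X × Y → F} {s : Set X} {t : Set Y}

theorem setIntegral_prod_of_forall_notMem_eq_zero (hf : IntegrableOn f (s ×ˢ t) (μ.prod ν))
    (h0 : ∀ x, ∀ y ∉ t, f (x, y) = 0) :
    ∫ z in s ×ˢ t, f z ∂μ.prod ν = ∫ x in s, ∫ y, f (x, y) ∂ν ∂μ := by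
  rw [setIntegral_prod f hf]
  exact integral_congr_ae
    (.of_forall fun x ↦ setIntegral_eq_integral_of_forall_compl_eq_zero (h0 x))

theorem setIntegral_prod_symm_of_forall_notMem_eq_zero
    (hf : IntegrableOn f (s ×ˢ t) (μ.prod ν)) (h0 : ∀ x, ∀ y ∉ t, f (x, y) = 0) :
    ∫ z in s ×ˢ t, f z ∂μ.prod ν = ∫ y, ∫ x in s, f (x, y) ∂μ ∂ν := by
  rw [← Measure.prod_restrict, integral_prod_symm f (by rwa [Measure.prod_restrict])]
  exact setIntegral_eq_integral_of_forall_compl_eq_zero fun y hy ↦ by simp [h0 _ y hy]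

end Integrals

section Laplacian

variable {ι E F : Type*} [Fintype ι] [NormedAddCommGroup E] [InnerProductSpace ℝ E]
  [FiniteDimensional ℝ E] [NormedAddCommGroup F] [NormedSpace ℝ F] {φ : E → F}

theorem laplacian_eq_sum_fderiv_fderiv (b : OrthonormalBasis ι ℝ E) (hφ : ContDiff ℝ 2 φ) (x : E) :
    Δ φ x = ∑ i, fderiv ℝ (fun y ↦ fderiv ℝ φ y (b i)) x (b i) := by
  have hdφ : Differentiable ℝ (fderiv ℝ φ) :=
    (hφ.fderiv_right one_add_one_eq_two.le).differentiable one_ne_zero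
  simp [laplacian_eq_iteratedFDeriv_orthonormalBasis φ b, iteratedFDeriv_two_apply,
    fderiv_clm_apply (hdφ x) (differentiableAt_const _)]

theorem continuous_laplacian (hφ : ContDiff ℝ 2 φ) : Continuous (Δ φ) := by
  have (v : E) : Continuous (fderiv ℝ fun y ↦ fderiv ℝ φ y v) :=
    ((hφ.fderiv_right one_add_one_eq_two.le).clm_apply contDiff_const).continuous_fderiv one_ne_zero
  rw [funext (laplacian_eq_sum_fderiv_fderiv (stdOrthonormalBasis ℝ E) hφ)]
  fun_prop

theorem lap_eq_laplacian {d : ℕ} {φ : EuclideanSpace ℝ (Fin d) → F} (hφ : ContDiff ℝ 2 φ) :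
    lap φ = Δ φ := by
  ext x
  simp [laplacian_eq_sum_fderiv_fderiv (EuclideanSpace.basisFun (Fin d) ℝ) hφ, lap]

end Laplacian

section RadialBump

theorem hasDerivAt_expNegInvGlue (s : ℝ) :
    HasDerivAt expNegInvGlue (s⁻¹ ^ 2 * expNegInvGlue s) s := by
  simpa using expNegInvGlue.hasDerivAt_polynomial_eval_inv_mul 1 s

variable {E : Type*} [NormedAddCommGroup E]

theorem expNegInvGlue_one_sub_norm_sq_eq_zero {y : E} (hy : y ∉ closedBall 0 1) :
    expNegInvGlue (1 - ‖y‖ ^ 2) = 0 := by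
  rw [mem_closedBall_zero_iff, not_le] at hy
  exact expNegInvGlue.zero_of_nonpos (by nlinarith)

/-- The standard bump function `exp (-1 / (1 - ‖y‖²))` of the unit ball, extended by zero. -/
noncomputable def radialBump (y : E) : ℝ :=
  expNegInvGlue (1 - ‖y‖ ^ 2)

/-- The density `2 (1 - ‖y‖²)⁻² exp (-1 / (1 - ‖y‖²))` on the unit ball, characterized by
`∇ radialBump y = - radialDensity y • y`. On the unit sphere the inverse takes the junk value `0`,
which is harmless since the exponential factor vanishes there. -/
noncomputable def radialDensity (y : E) : ℝ :=
  2 * ((1 - ‖y‖ ^ 2)⁻¹ ^ 2 * expNegInvGlue (1 - ‖y‖ ^ 2))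

theorem tsupport_radialBump_subset : tsupport (radialBump : E → ℝ) ⊆ closedBall 0 1 :=
  closure_minimal (support_subset_iff'.2 fun _ ↦ expNegInvGlue_one_sub_norm_sq_eq_zero)
    isClosed_closedBall

theorem tsupport_radialDensity_subset : tsupport (radialDensity : E → ℝ) ⊆ closedBall 0 1 :=
  closure_minimal (support_subset_iff'.2 fun y hy ↦ by
    simp [radialDensity, expNegInvGlue_one_sub_norm_sq_eq_zero hy]) isClosed_closedBall

theorem hasCompactSupport_radialBump [ProperSpace E] :
    HasCompactSupport (radialBump : E → ℝ) :=
  (isCompact_closedBall 0 1).of_isClosed_subset (isClosed_tsupport _) tsupport_radialBump_subset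

theorem hasCompactSupport_radialDensity [ProperSpace E] :
    HasCompactSupport (radialDensity : E → ℝ) :=
  (isCompact_closedBall 0 1).of_isClosed_subset (isClosed_tsupport _) tsupport_radialDensity_subset

variable [InnerProductSpace ℝ E]

theorem contDiff_radialBump {n : ℕ∞} : ContDiff ℝ n (radialBump : E → ℝ) :=
  expNegInvGlue.contDiff.comp (contDiff_const.sub (contDiff_norm_sq ℝ))

theorem contDiff_radialDensity {n : ℕ∞} : ContDiff ℝ n (radialDensity : E → ℝ) := by
  have h : ContDiff ℝ n fun s : ℝ ↦ s⁻¹ ^ 2 * expNegInvGlue s := by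
    have hpoly := expNegInvGlue.contDiff_polynomial_eval_inv_mul (n := n) (.X ^ 2 : Polynomial ℝ)
    simpa only [Polynomial.eval_pow, Polynomial.eval_X] using hpoly
  exact contDiff_const.mul (h.comp (contDiff_const.sub (contDiff_norm_sq ℝ)))

theorem integral_radialDensity_pos [FiniteDimensional ℝ E] [MeasurableSpace E]
    [OpensMeasurableSpace E] {μ : Measure E} [IsFiniteMeasureOnCompacts μ] [μ.IsOpenPosMeasure] :
    0 < ∫ y, radialDensity y ∂μ := by
  have hcont : Continuous (radialDensity : E → ℝ) := (contDiff_radialDensity (n := 0)).continuous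
  refine hcont.integral_pos_of_hasCompactSupport_nonneg_nonzero (x := 0)
    hasCompactSupport_radialDensity (fun y ↦ ?_) (by simp [radialDensity])
  have := expNegInvGlue.nonneg (1 - ‖y‖ ^ 2)
  unfold radialDensity
  positivity

theorem hasFDerivAt_radialBump (y : E) :
    HasFDerivAt radialBump (-radialDensity y • innerSL ℝ y) y := by
  convert! (hasDerivAt_expNegInvGlue (1 - ‖y‖ ^ 2)).comp_hasFDerivAt y
    ((hasStrictFDerivAt_norm_sq y).hasFDerivAt.const_sub 1) using 1
  rw [radialDensity]
  module

theorem radialDensity_smul_eq_neg_sum {ι F : Type*} [Fintype ι] [NormedAddCommGroup F]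
    [NormedSpace ℝ F] (b : OrthonormalBasis ι ℝ E) (L : E →L[ℝ] F) (y : E) :
    radialDensity y • L y = -∑ i, fderiv ℝ radialBump y (b i) • L (b i) := by
  conv_lhs => rw [← b.sum_repr' y, map_sum, b.sum_repr' y]
  simp [(hasFDerivAt_radialBump y).fderiv, Finset.smul_sum, smul_smul, real_inner_comm]

end RadialBump

section DilationAverage

theorem isCompact_Icc_prod_closedBall (E : Type*) [SeminormedAddCommGroup E] [ProperSpace E] :
    IsCompact (Icc (0 : ℝ) 1 ×ˢ closedBall (0 : E) 1) :=
  isCompact_Icc.prod (isCompact_closedBall 0 1)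

variable {E F : Type*} [NormedAddCommGroup E] [NormedSpace ℝ E] [NormedAddCommGroup F]
  [NormedSpace ℝ F]

theorem fderiv_comp_const_sub_smul_apply {g : E → F} (hg : Differentiable ℝ g) (x y v : E) (t : ℝ) :
    fderiv ℝ (fun y ↦ g (x - t • y)) y v = -(t • fderiv ℝ g (x - t • y) v) := by
  have h := (hg (x - t • y)).hasFDerivAt.comp y (((hasFDerivAt_id y).const_smul t).const_sub x)
  rw [show fderiv ℝ (fun y ↦ g (x - t • y)) y = _ from h.fderiv]
  simp

theorem sub_setIntegral_fderiv_apply_eq [CompleteSpace F] {φ : E → F} (hφ : ContDiff ℝ 1 φ)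
    (x y : E) : φ x - ∫ t in Icc (0 : ℝ) 1, fderiv ℝ φ (x - t • y) y = φ (x - y) := by
  have : Continuous (fderiv ℝ φ) := hφ.continuous_fderiv one_ne_zero
  have hderiv (t : ℝ) : HasDerivAt (fun t : ℝ ↦ -φ (x - t • y)) (fderiv ℝ φ (x - t • y) y) t := by
    have hline : HasDerivAt (fun t : ℝ ↦ x - t • y) (-y) t := by
      simpa using ((hasDerivAt_id t).smul_const y).const_sub x
    simpa using ((hφ.differentiable one_ne_zero _).hasFDerivAt.comp_hasDerivAt t hline).fun_neg
  rw [integral_Icc_eq_integral_Ioc, ← intervalIntegral.integral_of_le zero_le_one,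
    intervalIntegral.integral_eq_sub_of_hasDerivAt (fun t _ ↦ hderiv t)
      (Continuous.intervalIntegrable (by fun_prop) _ _)]
  simp

variable [MeasureSpace E]

/-- The average `∫₀¹ ∫ a (t, y) • g (x - t • y) dy dt` of the dilated translates of `g` with
weight `a`, the variable `y` ranging over the closed unit ball. It is written as one integral
over a compact cylinder so that it can be differentiated under the integral sign in one step. -/
noncomputable def dilationAverage (a : ℝ × E → ℝ) (g : E → F) (x : E) : F :=
  ∫ p in Icc (0 : ℝ) 1 ×ˢ closedBall (0 : E) 1, a p • g (x - p.1 • p.2)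

variable [FiniteDimensional ℝ E] [BorelSpace E] [(volume : Measure E).IsAddHaarMeasure]

theorem dilationAverage_eq_integral_integral {a : ℝ × E → ℝ} {g : E → F} (ha : Continuous a)
    (hg : Continuous g) (ha0 : ∀ t, ∀ y ∉ closedBall (0 : E) 1, a (t, y) = 0) (x : E) :
    dilationAverage a g x = ∫ t in Icc (0 : ℝ) 1, ∫ y, a (t, y) • g (x - t • y) := by
  have hint : Continuous fun p : ℝ × E ↦ a p • g (x - p.1 • p.2) := by fun_prop
  exact setIntegral_prod_of_forall_notMem_eq_zero
    (hint.continuousOn.integrableOn_compact (isCompact_Icc_prod_closedBall E))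
    fun t y hy ↦ by simp [ha0 t y hy]

theorem hasFDerivAt_dilationAverage {a : ℝ × E → ℝ} {g : E → F} (ha : Continuous a)
    (hg : ContDiff ℝ 1 g) (x : E) :
    HasFDerivAt (dilationAverage a g) (dilationAverage a (fderiv ℝ g) x) x := by
  have : Continuous g := hg.continuous
  have : Continuous (fderiv ℝ g) := hg.continuous_fderiv one_ne_zero
  refine hasFDerivAt_setIntegral_of_continuous (isCompact_Icc_prod_closedBall E)
    (f := fun x p ↦ a p • g (x - p.1 • p.2)) (f' := fun x p ↦ a p • fderiv ℝ g (x - p.1 • p.2))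
    (fun x ↦ by fun_prop) (by fun_prop) (fun x p ↦ ?_) x
  have hgx := (hg.differentiable one_ne_zero (x - p.1 • p.2)).hasFDerivAt
  exact ((hasFDerivAt_comp_sub _).2 hgx).const_smul (a p)

theorem fderiv_dilationAverage_apply {a : ℝ × E → ℝ} {g : E → F} (ha : Continuous a)
    (hg : ContDiff ℝ 1 g) (x v : E) :
    fderiv ℝ (dilationAverage a g) x v = dilationAverage a (fun y ↦ fderiv ℝ g y v) x := by
  have : Continuous (fderiv ℝ g) := hg.continuous_fderiv one_ne_zero
  rw [(hasFDerivAt_dilationAverage ha hg x).fderiv, dilationAverage,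
    ContinuousLinearMap.integral_apply]
  · rfl
  · exact (Continuous.continuousOn (by fun_prop)).integrableOn_compact
      (isCompact_Icc_prod_closedBall E)

theorem contDiff_dilationAverage {n : ℕ} {a : ℝ × E → ℝ} {g : E → F} (ha : Continuous a)
    (hg : ContDiff ℝ n g) : ContDiff ℝ n (dilationAverage a g) := by
  induction n generalizing g with
  | zero =>
    have : Continuous g := hg.continuous
    exact contDiff_zero.2 <| continuous_parametric_integral_of_continuous
      (f := fun x p ↦ a p • g (x - p.1 • p.2)) (by fun_prop) (isCompact_Icc_prod_closedBall E)
  | succ n ih =>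
    have hg₁ : ContDiff ℝ 1 g := hg.of_le (by norm_cast; lia)
    push_cast at hg ⊢
    rw [contDiff_succ_iff_fderiv_apply] at hg ⊢
    refine ⟨fun x ↦ (hasFDerivAt_dilationAverage ha hg₁ x).differentiableAt, by simp, fun v ↦ ?_⟩
    simp_rw [fderiv_dilationAverage_apply ha hg₁]
    exact ih (hg.2.2 v)

theorem integral_mul_smul_fderiv_sub_smul_eq {Ψ : E → ℝ} {g : E → F} (hΨ : ContDiff ℝ 1 Ψ)
    (hΨc : HasCompactSupport Ψ) (hg : ContDiff ℝ 1 g) (x v : E) (t : ℝ) :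
    ∫ y, (t * Ψ y) • fderiv ℝ g (x - t • y) v = ∫ y, fderiv ℝ Ψ y v • g (x - t • y) := by
  have : Continuous Ψ := hΨ.continuous
  have : Continuous (fderiv ℝ Ψ) := hΨ.continuous_fderiv one_ne_zero
  have : Continuous g := hg.continuous
  have : Continuous (fderiv ℝ g) := hg.continuous_fderiv one_ne_zero
  have hgd : Differentiable ℝ g := hg.differentiable one_ne_zero
  have hparts : ∫ y, Ψ y • fderiv ℝ (fun y ↦ g (x - t • y)) y v =
      -∫ y, fderiv ℝ Ψ y v • g (x - t • y) := by
    refine integral_smul_fderiv_eq_neg_fderiv_smul_of_integrable ?_ ?_ ?_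
      (fun y _ ↦ hΨ.differentiable one_ne_zero y) fun y _ ↦ by fun_prop
    · exact Continuous.integrable_of_hasCompactSupport (by fun_prop)
        (hΨc.fderiv_apply ℝ v).smul_right
    · simp_rw [fderiv_comp_const_sub_smul_apply hgd]
      exact Continuous.integrable_of_hasCompactSupport (by fun_prop) hΨc.smul_right
    · exact Continuous.integrable_of_hasCompactSupport (by fun_prop) hΨc.smul_right
  simp_rw [fderiv_comp_const_sub_smul_apply hgd, smul_neg, integral_neg, neg_inj] at hparts
  simpa only [mul_smul, smul_comm t] using hparts

theorem contDiff_succ_dilationAverage_mul {n : ℕ} (hn : 1 ≤ n) {Ψ : E → ℝ} {g : E → F}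
    (hΨ : ContDiff ℝ 1 Ψ) (hΨs : tsupport Ψ ⊆ closedBall 0 1) (hg : ContDiff ℝ n g) :
    ContDiff ℝ (n + 1) (dilationAverage (fun p ↦ p.1 * Ψ p.2) g) := by
  have : Continuous Ψ := hΨ.continuous
  have : Continuous (fderiv ℝ Ψ) := hΨ.continuous_fderiv one_ne_zero
  have hΨc : HasCompactSupport Ψ :=
    (isCompact_closedBall 0 1).of_isClosed_subset (isClosed_tsupport _) hΨs
  have hg₁ : ContDiff ℝ 1 g := hg.of_le (by exact_mod_cast hn)
  have : Continuous (fderiv ℝ g) := hg₁.continuous_fderiv one_ne_zero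
  have ha : Continuous fun p : ℝ × E ↦ p.1 * Ψ p.2 := by fun_prop
  have hfderiv (x v : E) : fderiv ℝ (dilationAverage (fun p ↦ p.1 * Ψ p.2) g) x v =
      dilationAverage (fun p ↦ fderiv ℝ Ψ p.2 v) g x := by
    rw [fderiv_dilationAverage_apply ha hg₁,
      dilationAverage_eq_integral_integral ha (by fun_prop)
        (fun t y hy ↦ by simp [image_eq_zero_of_notMem_tsupport (notMem_subset hΨs hy)]),
      dilationAverage_eq_integral_integral (by fun_prop) hg₁.continuous
        (fun t y hy ↦ by simp [fderiv_of_notMem_tsupport ℝ (notMem_subset hΨs hy)])]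
    simp_rw [integral_mul_smul_fderiv_sub_smul_eq hΨ hΨc hg₁]
  rw [contDiff_succ_iff_fderiv_apply]
  refine ⟨fun x ↦ (hasFDerivAt_dilationAverage ha hg₁ x).differentiableAt, by simp, fun v ↦ ?_⟩
  simp_rw [hfderiv]
  exact contDiff_dilationAverage (by fun_prop) hg

theorem convolution_eq_integral_smul_sub [CompleteSpace F] {ρ : E → ℝ} {φ : E → F}
    (hρ : Continuous ρ) (hρs : tsupport ρ ⊆ closedBall 0 1) (hφ : ContDiff ℝ 1 φ) (x : E) :
    (ρ ⋆[lsmul ℝ ℝ] φ) x = (∫ y, ρ y) • φ x -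
      ∫ t in Icc (0 : ℝ) 1, ∫ y, ρ y • fderiv ℝ φ (x - t • y) y := by
  have : Continuous φ := hφ.continuous
  have : Continuous (fderiv ℝ φ) := hφ.continuous_fderiv one_ne_zero
  have hρ0 (y : E) (hy : y ∉ closedBall 0 1) : ρ y = 0 :=
    image_eq_zero_of_notMem_tsupport (notMem_subset hρs hy)
  have hρc : HasCompactSupport ρ := .intro (isCompact_closedBall 0 1) hρ0
  have hint : IntegrableOn (fun p : ℝ × E ↦ ρ p.2 • fderiv ℝ φ (x - p.1 • p.2) p.2)
      (Icc (0 : ℝ) 1 ×ˢ closedBall (0 : E) 1) (volume.prod volume) :=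
    (Continuous.continuousOn (by fun_prop)).integrableOn_compact (isCompact_Icc_prod_closedBall E)
  have hintegrable (c : E → F) (hc : Continuous c) : Integrable fun y ↦ ρ y • c y :=
    (hρ.smul hc).integrable_of_hasCompactSupport hρc.smul_right
  have hseg (y : E) : ∫ t in Icc (0 : ℝ) 1, ρ y • fderiv ℝ φ (x - t • y) y =
      ρ y • φ x - ρ y • φ (x - y) := by
    rw [integral_smul, ← sub_setIntegral_fderiv_apply_eq hφ x y, ← smul_sub, sub_sub_cancel]
  rw [← setIntegral_prod_of_forall_notMem_eq_zero hint fun t y hy ↦ by simp [hρ0 y hy],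
    setIntegral_prod_symm_of_forall_notMem_eq_zero hint fun t y hy ↦ by simp [hρ0 y hy]]
  simp_rw [hseg]
  rw [integral_sub (hintegrable _ continuous_const) (hintegrable _ (by fun_prop)),
    integral_smul_const, sub_sub_cancel, convolution_lsmul]

end DilationAverage

section Representation

variable {E F : Type*} [NormedAddCommGroup E] [InnerProductSpace ℝ E] [FiniteDimensional ℝ E]
  [MeasurableSpace E] [BorelSpace E] [NormedAddCommGroup F] [NormedSpace ℝ F] {φ : E → F}

theorem integral_radialDensity_smul_fderiv_apply (hφ : ContDiff ℝ 2 φ) (x : E) (t : ℝ) :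
    ∫ y, radialDensity y • fderiv ℝ φ (x - t • y) y =
      -∫ y, (t * radialBump y) • Δ φ (x - t • y) := by
  let b := stdOrthonormalBasis ℝ E
  have hΨ : ContDiff ℝ 1 (radialBump : E → ℝ) := contDiff_radialBump
  have : Continuous (radialBump : E → ℝ) := hΨ.continuous
  have : Continuous (fderiv ℝ (radialBump : E → ℝ)) := hΨ.continuous_fderiv one_ne_zero
  have hφ₁ : ContDiff ℝ 1 (fderiv ℝ φ) := hφ.fderiv_right one_add_one_eq_two.le
  have : Continuous (fderiv ℝ φ) := hφ₁.continuous
  have hpartial (v : E) : ContDiff ℝ 1 fun y ↦ fderiv ℝ φ y v := hφ₁.clm_apply contDiff_const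
  have (v : E) : Continuous (fderiv ℝ fun y ↦ fderiv ℝ φ y v) :=
    (hpartial v).continuous_fderiv one_ne_zero
  have hΨc := hasCompactSupport_radialBump (E := E)
  calc ∫ y, radialDensity y • fderiv ℝ φ (x - t • y) y
      = -∑ i, ∫ y, fderiv ℝ radialBump y (b i) • fderiv ℝ φ (x - t • y) (b i) := by
        simp_rw [radialDensity_smul_eq_neg_sum b]
        rw [integral_neg, integral_finsetSum]
        intro i _
        exact Continuous.integrable_of_hasCompactSupport (by fun_prop)
          (hΨc.fderiv_apply ℝ (b i)).smul_right
    _ = -∑ i, ∫ y, (t * radialBump y) •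
          fderiv ℝ (fun z ↦ fderiv ℝ φ z (b i)) (x - t • y) (b i) := by
        simp_rw [integral_mul_smul_fderiv_sub_smul_eq hΨ hΨc (hpartial _)]
    _ = -∫ y, (t * radialBump y) • Δ φ (x - t • y) := by
        simp_rw [laplacian_eq_sum_fderiv_fderiv b hφ, Finset.smul_sum]
        rw [integral_finsetSum]
        intro i _
        exact Continuous.integrable_of_hasCompactSupport (by fun_prop) hΨc.mul_left.smul_right

theorem convolution_radialDensity_eq [CompleteSpace F] (hφ : ContDiff ℝ 2 φ) (x : E) :
    (radialDensity ⋆[lsmul ℝ ℝ] φ) x = (∫ y : E, radialDensity y) • φ x +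
      dilationAverage (fun p ↦ p.1 * radialBump p.2) (Δ φ) x := by
  have : Continuous (radialBump : E → ℝ) := (contDiff_radialBump (n := 0)).continuous
  rw [convolution_eq_integral_smul_sub (contDiff_radialDensity (n := 0)).continuous
      tsupport_radialDensity_subset (hφ.of_le one_le_two),
    dilationAverage_eq_integral_integral (by fun_prop) (continuous_laplacian hφ) fun t y hy ↦ by
      simp [radialBump, expNegInvGlue_one_sub_norm_sq_eq_zero hy]]
  simp_rw [integral_radialDensity_smul_fderiv_apply hφ, integral_neg, sub_neg_eq_add]

end Representation

section Regularity

variable {E F : Type*} [NormedAddCommGroup E] [InnerProductSpace ℝ E] [FiniteDimensional ℝ E]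
  [NormedAddCommGroup F] [NormedSpace ℝ F] [CompleteSpace F] {φ : E → F}

theorem contDiff_succ_of_contDiff_laplacian {n : ℕ} (hn : 1 ≤ n) (hφ : ContDiff ℝ 2 φ)
    (hΔφ : ContDiff ℝ n (Δ φ)) : ContDiff ℝ (n + 1) φ := by
  borelize E
  have hmollified : ContDiff ℝ ((n + 1 : ℕ) : ℕ∞) (radialDensity ⋆[lsmul ℝ ℝ] φ) :=
    hasCompactSupport_radialDensity.contDiff_convolution_left _ contDiff_radialDensity
      hφ.continuous.locallyIntegrable
  have haverage : ContDiff ℝ (n + 1) (dilationAverage (fun p ↦ p.1 * radialBump p.2) (Δ φ)) :=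
    contDiff_succ_dilationAverage_mul hn contDiff_radialBump tsupport_radialBump_subset hΔφ
  have hφ_eq : φ = fun x ↦ (∫ y : E, radialDensity y)⁻¹ • ((radialDensity ⋆[lsmul ℝ ℝ] φ) x -
      dilationAverage (fun p ↦ p.1 * radialBump p.2) (Δ φ) x) := by
    ext x
    rw [convolution_radialDensity_eq hφ, add_sub_cancel_right,
      inv_smul_smul₀ integral_radialDensity_pos.ne']
  rw [hφ_eq]
  exact contDiff_const.smul (ContDiff.sub (mod_cast hmollified) haverage)

theorem ground_state_is_smooth_general {n : ℕ∞} {G : E × F → F} (hG : ContDiff ℝ n G)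
    (hφ : ContDiff ℝ 2 φ) (heq : ∀ x, Δ φ x = G (x, φ x)) : ContDiff ℝ (n + 1) φ := by
  have hsucc (k : ℕ) (hk : (k : ℕ∞) ≤ n) : ContDiff ℝ (k + 1) φ := by
    induction k with
    | zero => exact hφ.of_le (by norm_num)
    | succ k ih =>
      have hφk : ContDiff ℝ (k + 1 : ℕ) φ := mod_cast ih (le_trans (by norm_cast; lia) hk)
      have hΔφ : ContDiff ℝ (k + 1 : ℕ) (Δ φ) := by
        rw [funext heq]
        exact (hG.of_le (mod_cast hk)).comp (contDiff_id.prodMk hφk)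
      exact contDiff_succ_of_contDiff_laplacian (by lia) hφ hΔφ
  refine contDiff_iff_forall_nat_le (n := n + 1).2 fun m hm ↦ ?_
  cases m with
  | zero => exact hφ.of_le (by norm_num)
  | succ k => exact mod_cast hsucc k (by simpa using hm)

end Regularity

/-- Elliptic regularity for the ground state equation: a `C²` solution of
`Δφ = ωφ + β(φ²)φ` on `ℝ^d` is smooth. -/
theorem ground_state_is_smooth
    {d : ℕ} (hd : 1 ≤ d) (ω : ℝ)
    (β : ℝ → ℝ) (hβ : ContDiff ℝ (⊤ : ℕ∞) β)
    (φ : EuclideanSpace ℝ (Fin d) → ℝ) (hφ : ContDiff ℝ 2 φ)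
    (heq : ∀ x, lap φ x = ω * φ x + β ((φ x) ^ 2) * φ x) :
    ContDiff ℝ (⊤ : ℕ∞) φ :=
  (ground_state_is_smooth_general (n := ⊤) (G := fun p ↦ ω * p.2 + β (p.2 ^ 2) * p.2)
    (by fun_prop) hφ fun x ↦ by rw [← lap_eq_laplacian hφ, heq]).of_le le_self_add
end

section
/- Let d ≥ 1, ω > 0, and let β : ℝ → ℝ be C^∞ with β(0) = 0. Let φ : ℝ^d → ℝ be a positive, radial, twice continuously differentiable solution of Δφ = ωφ + β(φ²)φ on ℝ^d with φ(x) → 0 as |x| → ∞. Then for every multi-index α there exists a constant C_α > 0 such that |∂^α φ(x)| ≤ C_α (1 + |x|)^{−(d−1)/2} e^{−√ω |x|} for all x ∈ ℝ^d. -/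
open scoped Topology

/-!
In the radial variable the equation reads `u'' + (d - 1) / r * u' = V u` with `V = F(u) / u → ω`.
If `a` is a subsolution of the Riccati equation `a² = V + a' + (d - 1) / r * a`, then `z = u' + a u`
satisfies `z' ≥ (a - (d - 1) / r) z`, so `z` cannot become positive without keeping `u` away from
`0`; hence `u' ≤ -a u` and `u = O(exp (-∫ a))`. A constant `a < √ω` gives a crude exponential rate,
which turns `V - ω = O(u)` into `O(r⁻²)`; then `a = √ω + (d - 1) / (2 r) - A / r²` is admissible and
integrates to the sharp rate. Constant comparisons from both sides also give `u' = O(u)`.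

At infinity `(1 / ‖x‖, x / ‖x‖, u, u')` is a bounded solution of an autonomous total differential
equation whose field is smooth and tangent to `{u = u' = 0}`. Every derivative of `u ‖x‖` is thus a
smooth function of these variables vanishing on that subspace, hence `O(|u| + |u'|)`.

Smoothness at the origin comes from integrating the radial equation once:
`∇φ(x) = (∫₀¹ tᵈ⁻¹ F(φ(t x)) dt) x`, so that `φ` has one more derivative than it is known to have.
-/

open Asymptotics Filter Set

section Riccati

theorem eventually_nonpos_or_eventually_ge {z z' : ℝ → ℝ}
    (hz : ∀ᶠ r in atTop, HasDerivAt z (z' r) r) (hz' : ∀ᶠ r in atTop, 0 < z r → 0 < z' r) :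
    (∀ᶠ r in atTop, z r ≤ 0) ∨ ∃ δ > 0, ∀ᶠ r in atTop, δ ≤ z r := by
  obtain ⟨R, hR⟩ := eventually_atTop.1 (hz.and hz')
  by_cases h : ∀ r ≥ R, z r ≤ 0
  · exact .inl (eventually_atTop.2 ⟨R, h⟩)
  push Not at h
  obtain ⟨r₁, hr₁, hpos⟩ := h
  refine .inr ⟨z r₁, hpos, eventually_atTop.2 ⟨r₁, fun r hr => ?_⟩⟩
  refine image_le_of_deriv_right_lt_deriv_boundary' (f := fun _ => z r₁) (f' := fun _ => 0)
    continuousOn_const (fun x _ => hasDerivWithinAt_const ..) le_rfl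
    (fun x hx => (hR x (hr₁.trans hx.1)).1.continuousAt.continuousWithinAt)
    (fun x hx => (hR x (hr₁.trans hx.1)).1.hasDerivWithinAt)
    (fun x hx heq => (hR x (hr₁.trans hx.1)).2 (heq ▸ hpos)) (right_mem_Icc.2 hr)

theorem tendsto_atTop_of_eventually_le_deriv {v v' : ℝ → ℝ} {c : ℝ} (hc : 0 < c)
    (hv : ∀ᶠ r in atTop, HasDerivAt v (v' r) r) (hv' : ∀ᶠ r in atTop, c ≤ v' r) :
    Tendsto v atTop atTop := by
  obtain ⟨R, hR⟩ := eventually_atTop.1 (hv.and hv')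
  have hlinear : Tendsto (fun r => v R + c * (r - R)) atTop atTop :=
    tendsto_atTop_add_const_left _ _
      ((tendsto_atTop_add_const_right _ (-R) tendsto_id).const_mul_atTop hc)
  refine tendsto_atTop_mono' _ ?_ hlinear
  filter_upwards [eventually_ge_atTop R] with r hr
  have := (convex_Ici R).mul_sub_le_image_sub_of_le_deriv (f := v) (C := c)
    (fun x hx => (hR x hx).1.continuousAt.continuousWithinAt)
    (fun x hx => (hR x (interior_subset hx)).1.differentiableAt.differentiableWithinAt)
    (fun x hx => (hR x (interior_subset hx)).1.deriv ▸ (hR x (interior_subset hx)).2)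
    R self_mem_Ici r hr hr
  linarith

/-
If `z = v' + a v` were positive somewhere, the differential inequality `z' ≥ (a - p) z` would keep
it bounded away from `0`, hence also `v'`, and `v` could not tend to `0`.
-/
theorem eventually_deriv_add_mul_nonpos {v v' a a' p V : ℝ → ℝ}
    (hv : ∀ᶠ r in atTop, HasDerivAt v (v' r) r)
    (hv' : ∀ᶠ r in atTop, HasDerivAt v' (V r * v r - p r * v' r) r)
    (hlim : Tendsto v atTop (𝓝 0))
    (ha : ∀ᶠ r in atTop, HasDerivAt a (a' r) r) (ha_bdd : a =O[atTop] (1 : ℝ → ℝ))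
    (hpa : ∀ᶠ r in atTop, p r < a r)
    (hsub : ∀ᶠ r in atTop, 0 ≤ (V r - a r ^ 2 + a' r + p r * a r) * v r) :
    ∀ᶠ r in atTop, v' r + a r * v r ≤ 0 := by
  have hz : ∀ᶠ r in atTop, HasDerivAt (fun r => v' r + a r * v r)
      ((a r - p r) * (v' r + a r * v r) + (V r - a r ^ 2 + a' r + p r * a r) * v r) r := by
    filter_upwards [hv, hv', ha] with r hv hv' ha
    exact (hv'.add (ha.mul hv)).congr_deriv (by ring)
  have hz_pos : ∀ᶠ r in atTop, 0 < v' r + a r * v r →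
      0 < (a r - p r) * (v' r + a r * v r) +
        (V r - a r ^ 2 + a' r + p r * a r) * v r := by
    filter_upwards [hpa, hsub] with r hpa hsub hpos
    exact add_pos_of_pos_of_nonneg (mul_pos (sub_pos.2 hpa) hpos) hsub
  refine (eventually_nonpos_or_eventually_ge hz hz_pos).resolve_right ?_
  rintro ⟨δ, hδ, hge⟩
  have hav : Tendsto (fun r => a r * v r) atTop (𝓝 0) := by
    simpa using (ha_bdd.mul_isLittleO ((isLittleO_one_iff ℝ).2 hlim)).tendsto_zero_of_tendsto
      (tendsto_const_nhds.congr fun _ => (one_mul _).symm)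
  have hv'_ge : ∀ᶠ r in atTop, δ / 2 ≤ v' r := by
    filter_upwards [hge, hav.eventually_le_const (half_pos hδ)] with r hge hle
    linarith
  exact not_tendsto_nhds_of_tendsto_atTop
    (tendsto_atTop_of_eventually_le_deriv (half_pos hδ) hv hv'_ge) 0 hlim

theorem isBigO_exp_neg_of_deriv_add_mul_nonpos {u u' a A : ℝ → ℝ}
    (hu : ∀ᶠ r in atTop, HasDerivAt u (u' r) r) (hA : ∀ᶠ r in atTop, HasDerivAt A (a r) r)
    (hnonneg : ∀ᶠ r in atTop, 0 ≤ u r) (hle : ∀ᶠ r in atTop, u' r + a r * u r ≤ 0) :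
    u =O[atTop] fun r => Real.exp (-A r) := by
  obtain ⟨R, hR⟩ := eventually_atTop.1 (((hu.and hA).and hnonneg).and hle)
  have hderiv : ∀ r ≥ R, HasDerivAt (fun r => u r * Real.exp (A r))
      ((u' r + a r * u r) * Real.exp (A r)) r := fun r hr =>
    ((hR r hr).1.1.1.mul (hR r hr).1.1.2.exp).congr_deriv (by ring)
  have hanti : AntitoneOn (fun r => u r * Real.exp (A r)) (Ici R) :=
    antitoneOn_of_hasDerivWithinAt_nonpos (convex_Ici R)
      (fun r hr => (hderiv r hr).continuousAt.continuousWithinAt)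
      (fun r hr => (hderiv r (interior_subset hr)).hasDerivWithinAt)
      (fun r hr => mul_nonpos_of_nonpos_of_nonneg (hR r (interior_subset hr)).2 (Real.exp_pos _).le)
  refine .of_bound (u R * Real.exp (A R)) ?_
  filter_upwards [eventually_ge_atTop R] with r hr
  rw [Real.norm_of_nonneg (hR r hr).1.2, Real.norm_of_nonneg (Real.exp_pos _).le, Real.exp_neg,
    ← div_eq_mul_inv, le_div_iff₀ (Real.exp_pos _)]
  exact hanti self_mem_Ici hr hr

variable {u u' p V : ℝ → ℝ} {ω : ℝ} (hu : ∀ᶠ r in atTop, HasDerivAt u (u' r) r)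
  (hu' : ∀ᶠ r in atTop, HasDerivAt u' (V r * u r - p r * u' r) r)
  (hpos : ∀ᶠ r in atTop, 0 < u r) (hlim : Tendsto u atTop (𝓝 0))
  (hp : Tendsto p atTop (𝓝 0)) (hV : Tendsto V atTop (𝓝 ω))

include hu hu' hpos hlim hp hV

theorem eventually_deriv_add_const_mul_nonpos {m : ℝ} (hm : 0 < m) (hmω : m ^ 2 < ω) :
    ∀ᶠ r in atTop, u' r + m * u r ≤ 0 := by
  have hlimit : Tendsto (fun r => V r - m ^ 2 + 0 + p r * m) atTop (𝓝 (ω - m ^ 2)) := by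
    simpa using ((hV.sub_const (m ^ 2)).add_const 0).add (hp.mul_const m)
  refine eventually_deriv_add_mul_nonpos hu hu' hlim (.of_forall fun r => hasDerivAt_const r m)
    (isBigO_const_const m one_ne_zero _) (hp.eventually_lt_const hm) ?_
  filter_upwards [hpos, hlimit.eventually_const_lt (sub_pos.2 hmω)] with r hpos hcoeff
  exact (mul_pos hcoeff hpos).le

theorem isBigO_exp_neg_mul {m : ℝ} (hm : 0 < m) (hmω : m ^ 2 < ω) :
    u =O[atTop] fun r => Real.exp (-(m * r)) :=
  isBigO_exp_neg_of_deriv_add_mul_nonpos hu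
    (.of_forall fun r => by simpa using (hasDerivAt_id r).const_mul m) (hpos.mono fun _ h => h.le)
    (eventually_deriv_add_const_mul_nonpos hu hu' hpos hlim hp hV hm hmω)

theorem deriv_isBigO_self (hω : 0 < ω) : u' =O[atTop] u := by
  have hlimit : Tendsto (fun r => V r - (ω + 1) ^ 2 + 0 + p r * (ω + 1)) atTop
      (𝓝 (ω - (ω + 1) ^ 2)) := by
    simpa using ((hV.sub_const ((ω + 1) ^ 2)).add_const 0).add (hp.mul_const (ω + 1))
  have hlower : ∀ᶠ r in atTop, -u' r + (ω + 1) * -u r ≤ 0 := by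
    refine eventually_deriv_add_mul_nonpos (V := V) (p := p) (hu.mono fun r h => h.neg)
      (hu'.mono fun r h => h.neg.congr_deriv (by ring)) (by simpa using hlim.neg)
      (.of_forall fun r => hasDerivAt_const r _) (isBigO_const_const _ one_ne_zero _)
      (hp.eventually_lt_const (by linarith)) ?_
    filter_upwards [hpos, hlimit.eventually_lt_const (by nlinarith : _ < (0 : ℝ))]
      with r hpos hcoeff
    exact mul_nonneg_of_nonpos_of_nonpos hcoeff.le (neg_nonpos.2 hpos.le)
  have hupper := eventually_deriv_add_const_mul_nonpos hu hu' hpos hlim hp hV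
    (Real.sqrt_pos.2 (half_pos hω)) (by rw [Real.sq_sqrt (half_pos hω).le]; linarith)
  refine .of_bound (ω + 1) ?_
  filter_upwards [hpos, hlower, hupper] with r hpos hlower hupper
  rw [Real.norm_of_nonneg hpos.le, Real.norm_eq_abs, abs_le]
  exact ⟨by linarith, by nlinarith [mul_pos (Real.sqrt_pos.2 (half_pos hω)) hpos]⟩

end Riccati

section SharpDecay

/--
The approximate solution `√ω + k / r - A / r²` of the Riccati equation
`a² = ω + a' + (2k / r) a`, whose error is of order `r⁻²` with a sign governed by `A`.
-/
noncomputable def riccatiRate (ω k A r : ℝ) : ℝ :=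
  √ω + k * r⁻¹ - A * (r ^ 2)⁻¹

theorem hasDerivAt_riccatiRate (ω k A : ℝ) {r : ℝ} (hr : r ≠ 0) :
    HasDerivAt (riccatiRate ω k A) (-k * (r ^ 2)⁻¹ + 2 * A * (r ^ 3)⁻¹) r := by
  refine ((((hasDerivAt_inv hr).const_mul k).const_add (√ω)).sub
    (((hasDerivAt_pow 2 r).inv (pow_ne_zero 2 hr)).const_mul A)).congr_deriv ?_
  field_simp
  push_cast
  ring

theorem hasDerivAt_primitive_riccatiRate (ω k A : ℝ) {r : ℝ} (hr : r ≠ 0) :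
    HasDerivAt (fun r => √ω * r + k * Real.log r + A * r⁻¹) (riccatiRate ω k A r) r := by
  refine ((((hasDerivAt_id r).const_mul (√ω)).add ((Real.hasDerivAt_log hr).const_mul k)).add
    ((hasDerivAt_inv hr).const_mul A)).congr_deriv ?_
  simp only [riccatiRate]
  ring

theorem tendsto_riccatiRate (ω k A : ℝ) : Tendsto (riccatiRate ω k A) atTop (𝓝 √ω) := by
  have hsq : Tendsto (fun r : ℝ => (r ^ 2)⁻¹) atTop (𝓝 0) :=
    tendsto_inv_atTop_zero.comp (tendsto_pow_atTop two_ne_zero)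
  change Tendsto (fun r => √ω + k * r⁻¹ - A * (r ^ 2)⁻¹) atTop (𝓝 √ω)
  simpa using
    ((tendsto_inv_atTop_zero.const_mul k).const_add (√ω)).sub (hsq.const_mul A)

theorem exists_riccatiRate_subsolution {V : ℝ → ℝ} {ω : ℝ} (hω : 0 < ω)
    (hV : (fun r => V r - ω) =O[atTop] fun r => (r ^ 2)⁻¹) (k : ℝ) :
    ∃ A ≥ 0, ∀ᶠ r in atTop, 0 ≤ V r - riccatiRate ω k A r ^ 2 +
      (-k * (r ^ 2)⁻¹ + 2 * A * (r ^ 3)⁻¹) + 2 * k / r * riccatiRate ω k A r := by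
  obtain ⟨K, hK, hbound⟩ := hV.exists_nonneg
  have hs : 0 < √ω := Real.sqrt_pos.2 hω
  set A := (K + |k| + 1) / √ω
  have hA0 : 0 ≤ A := by positivity
  have hsA : √ω * A = K + |k| + 1 := mul_div_cancel₀ _ hs.ne'
  refine ⟨A, hA0, ?_⟩
  filter_upwards [hbound.bound, eventually_ge_atTop A, eventually_gt_atTop 0] with r hVr hrA hr
  rw [Real.norm_eq_abs, norm_inv, norm_pow, Real.norm_of_nonneg hr.le] at hVr
  have hquartic : A ^ 2 * (r ^ 4)⁻¹ ≤ (r ^ 2)⁻¹ := by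
    rw [← div_eq_mul_inv, div_le_iff₀ (by positivity), show (r ^ 2)⁻¹ * r ^ 4 = r ^ 2 by field_simp]
    gcongr
  have herror : V r - riccatiRate ω k A r ^ 2 + (-k * (r ^ 2)⁻¹ + 2 * A * (r ^ 3)⁻¹) +
      2 * k / r * riccatiRate ω k A r = (V r - √ω ^ 2) +
        (2 * (√ω * A) + k ^ 2 - k) * (r ^ 2)⁻¹ + 2 * A * (r ^ 3)⁻¹ - A ^ 2 * (r ^ 4)⁻¹ := by
    simp only [riccatiRate]
    field_simp
    ring
  have hcoeff : (K + 1) * (r ^ 2)⁻¹ ≤ (2 * (√ω * A) + k ^ 2 - k) * (r ^ 2)⁻¹ := by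
    gcongr
    rw [hsA]
    linarith [le_abs_self k, abs_nonneg k, sq_nonneg k]
  have hcubic : 0 ≤ 2 * A * (r ^ 3)⁻¹ := by positivity
  rw [herror, Real.sq_sqrt hω.le]
  linarith [neg_le_of_abs_le hVr]

theorem isBigO_rpow_mul_exp_neg_sqrt {u u' V : ℝ → ℝ} {k ω : ℝ} (hω : 0 < ω)
    (hu : ∀ᶠ r in atTop, HasDerivAt u (u' r) r)
    (hu' : ∀ᶠ r in atTop, HasDerivAt u' (V r * u r - 2 * k / r * u' r) r)
    (hpos : ∀ᶠ r in atTop, 0 < u r) (hlim : Tendsto u atTop (𝓝 0))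
    (hV : (fun r => V r - ω) =O[atTop] fun r => (r ^ 2)⁻¹) :
    u =O[atTop] fun r => r ^ (-k) * Real.exp (-√ω * r) := by
  obtain ⟨A, hA, hsub⟩ := exists_riccatiRate_subsolution hω hV k
  have hfriction : ∀ᶠ r : ℝ in atTop, 2 * k / r < riccatiRate ω k A r :=
    (tendsto_id.const_div_atTop _).eventually_lt (tendsto_riccatiRate ω k A)
      (Real.sqrt_pos.2 hω)
  have hle := eventually_deriv_add_mul_nonpos hu hu' hlim
    ((eventually_ne_atTop 0).mono fun r => hasDerivAt_riccatiRate ω k A)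
    ((tendsto_riccatiRate ω k A).isBigO_one ℝ) hfriction
    (hsub.and hpos |>.mono fun r h => mul_nonneg h.1 h.2.le)
  refine (isBigO_exp_neg_of_deriv_add_mul_nonpos hu
    ((eventually_ne_atTop 0).mono fun r => hasDerivAt_primitive_riccatiRate ω k A)
    (hpos.mono fun _ h => h.le) hle).trans (.of_bound 1 ?_)
  filter_upwards [eventually_gt_atTop 0] with r hr
  rw [one_mul, Real.norm_of_nonneg (Real.exp_pos _).le, Real.norm_of_nonneg (by positivity),
    Real.rpow_def_of_pos hr, ← Real.exp_add]
  gcongr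
  have : 0 ≤ A * r⁻¹ := by positivity
  linarith

end SharpDecay

section NonlinearRadialODE

variable {F u u' : ℝ → ℝ} {k ω : ℝ}

theorem div_self_sub_isBigO (hF : ContDiff ℝ 2 F) (hF0 : F 0 = 0) (hF' : HasDerivAt F ω 0) :
    (fun y => F y / y - ω) =O[𝓝[≠] 0] fun y => y := by
  have htaylor : (fun y => F y - ω * y) =O[𝓝 0] fun y => y ^ 2 := by
    have hremainder := (taylor_isLittleO_univ (x₀ := 0) (n := 2) hF).isBigO
    simp only [taylorWithinEval_succ, taylor_within_zero_eval, iteratedDerivWithin_univ, hF0,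
      sub_zero, smul_eq_mul] at hremainder
    refine (hremainder.add ((isBigO_refl (fun y : ℝ => y ^ 2) (𝓝 0)).const_mul_left
      (iteratedDeriv 2 F 0 / 2))).congr_left fun y => ?_
    simp only [zero_add, iteratedDeriv_one, hF'.deriv]
    norm_num only [Nat.factorial]
    ring
  refine ((htaylor.mono nhdsWithin_le_nhds).mul (isBigO_refl (fun y : ℝ => y⁻¹) _)).congr' ?_ ?_
  all_goals
    filter_upwards [self_mem_nhdsWithin] with y hy
    have : y ≠ 0 := hy
    field_simp

variable (hF : ContDiff ℝ 2 F) (hF0 : F 0 = 0) (hF' : HasDerivAt F ω 0) (hω : 0 < ω)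
  (hu : ∀ᶠ r in atTop, HasDerivAt u (u' r) r)
  (hu' : ∀ᶠ r in atTop, HasDerivAt u' (F (u r) - 2 * k / r * u' r) r)
  (hpos : ∀ᶠ r in atTop, 0 < u r) (hlim : Tendsto u atTop (𝓝 0))

include hu' hpos in
theorem eventually_hasDerivAt_linearized : ∀ᶠ r in atTop,
    HasDerivAt u' (F (u r) / u r * u r - 2 * k / r * u' r) r := by
  filter_upwards [hu', hpos] with r hu' hpos
  rwa [div_mul_cancel₀ _ hpos.ne']

include hpos hlim in
theorem tendsto_nhdsNE_zero : Tendsto u atTop (𝓝[≠] 0) :=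
  tendsto_nhdsWithin_iff.2 ⟨hlim, hpos.mono fun _ h => h.ne'⟩

theorem tendsto_div_nhdsNE_zero (hF0 : F 0 = 0) (hF' : HasDerivAt F ω 0) :
    Tendsto (fun y => F y / y) (𝓝[≠] 0) (𝓝 ω) := by
  simpa [hF0, div_eq_inv_mul] using hF'.tendsto_slope_zero

include hF0 hF' hω hu hu' hpos hlim

theorem radial_deriv_isBigO_self : u' =O[atTop] u :=
  deriv_isBigO_self hu (eventually_hasDerivAt_linearized hu' hpos) hpos hlim
    (tendsto_id.const_div_atTop _)
    ((tendsto_div_nhdsNE_zero hF0 hF').comp (tendsto_nhdsNE_zero hpos hlim)) hω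

/-
The crude rate `exp (-√(ω / 2) r)` makes `F(u) / u - ω = O(u)` smaller than any power of `1 / r`,
after which the sharp comparison applies.
-/
include hF in
theorem radial_isBigO_rpow_mul_exp_neg_sqrt :
    u =O[atTop] fun r => r ^ (-k) * Real.exp (-√ω * r) := by
  have hlin := eventually_hasDerivAt_linearized hu' hpos
  have hu0 := tendsto_nhdsNE_zero hpos hlim
  have hcrude : u =O[atTop] fun r => Real.exp (-(√(ω / 2) * r)) :=
    isBigO_exp_neg_mul hu hlin hpos hlim (tendsto_id.const_div_atTop _)
      ((tendsto_div_nhdsNE_zero hF0 hF').comp hu0) (Real.sqrt_pos.2 (half_pos hω))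
      (by rw [Real.sq_sqrt (half_pos hω).le]; exact half_lt_self hω)
  have hpotential : (fun r => F (u r) / u r - ω) =O[atTop] u :=
    (div_self_sub_isBigO hF hF0 hF').comp_tendsto hu0
  have hexp : (fun r => Real.exp (-(√(ω / 2) * r))) =O[atTop] fun r => (r ^ 2)⁻¹ := by
    refine (isLittleO_exp_neg_mul_rpow_atTop (Real.sqrt_pos.2 (half_pos hω)) (-2)).isBigO.congr'
      (.of_forall fun r => by simp only [neg_mul]) ?_
    filter_upwards [eventually_gt_atTop 0] with r hr
    rw [Real.rpow_neg hr.le, Real.rpow_two]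
  exact isBigO_rpow_mul_exp_neg_sqrt hω hu hlin hpos hlim ((hpotential.trans hcrude).trans hexp)

end NonlinearRadialODE

section TotalDifferentialEquation

universe u

theorem fderiv_apply_mk_zero {A B F : Type*} [NormedAddCommGroup A] [NormedSpace ℝ A]
    [NormedAddCommGroup B] [NormedSpace ℝ B] [NormedAddCommGroup F] [NormedSpace ℝ F]
    {G : A × B → F} (hG0 : ∀ a, G (a, 0) = 0) {a : A} (hG : DifferentiableAt ℝ G (a, 0)) (w : A) :
    fderiv ℝ G (a, 0) (w, 0) = 0 := by
  have hcomp : HasFDerivAt (fun b => G (b, 0)) ((fderiv ℝ G (a, 0)).comp (.inl ℝ A B)) a :=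
    HasFDerivAt.comp a hG.hasFDerivAt (hasFDerivAt_prodMk_left a 0)
  have hzero : HasFDerivAt (fun b => G (b, 0)) (0 : A →L[ℝ] F) a := by
    simpa only [hG0] using hasFDerivAt_const (0 : F) a
  simpa using DFunLike.congr_fun (hcomp.unique hzero) w

theorem isBigO_comp_snd_of_forall_mk_zero {α A B F : Type*} [NormedAddCommGroup A]
    [NormedSpace ℝ A] [NormedAddCommGroup B] [NormedSpace ℝ B] [FiniteDimensional ℝ (A × B)]
    [NormedAddCommGroup F] [NormedSpace ℝ F] {l : Filter α} {γ : α → A × B}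
    (hγ : γ =O[l] (1 : α → ℝ)) {G : A × B → F} (hG : ContDiff ℝ 1 G) (hG0 : ∀ a, G (a, 0) = 0) :
    (G ∘ γ) =O[l] fun x => (γ x).2 := by
  obtain ⟨M, hM⟩ := hγ.bound
  have : ProperSpace (A × B) := FiniteDimensional.proper_real _
  obtain ⟨K, hK⟩ := hG.contDiffOn.exists_lipschitzOnWith one_ne_zero
    (convex_closedBall (0 : A × B) M) (isCompact_closedBall 0 M)
  refine .of_bound K ?_
  filter_upwards [hM] with x hx
  rw [Pi.one_apply, norm_one, mul_one] at hx
  have hproj : ‖((γ x).1, (0 : B))‖ ≤ M := by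
    simpa [Prod.norm_def] using (norm_fst_le (γ x)).trans hx
  calc ‖G (γ x)‖ = ‖G (γ x) - G ((γ x).1, 0)‖ := by rw [hG0, sub_zero]
    _ ≤ K * ‖γ x - ((γ x).1, 0)‖ :=
      hK.norm_sub_le (mem_closedBall_zero_iff.2 hx) (mem_closedBall_zero_iff.2 hproj)
    _ = K * ‖(γ x).2‖ := by simp [Prod.norm_def]

/-
If `Dγ = X ∘ γ`, then `D(G ∘ γ) = G₁ ∘ γ` with `G₁ = DG ∘ X`; when `X` is tangent to the subspace
`A × 0` and `G` vanishes on it, so does `G₁`, and the estimate passes from `G` to `G₁`.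
-/
theorem iteratedFDeriv_comp_isBigO_snd {E : Type u} {A B : Type*} [NormedAddCommGroup E]
    [NormedSpace ℝ E] [NormedAddCommGroup A] [NormedSpace ℝ A] [NormedAddCommGroup B]
    [NormedSpace ℝ B] [FiniteDimensional ℝ (A × B)] {l : Filter E} {γ : E → A × B}
    {X : A × B → E →L[ℝ] A × B} (hX : ContDiff ℝ (⊤ : ℕ∞) X) (hX0 : ∀ a v, (X (a, 0) v).2 = 0)
    (hγ : ∀ᶠ x in l, ∀ᶠ y in 𝓝 x, HasFDerivAt γ (X (γ y)) y) (hγ_bdd : γ =O[l] (1 : E → ℝ))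
    (n : ℕ) {F : Type u} [NormedAddCommGroup F] [NormedSpace ℝ F] {G : A × B → F}
    (hG : ContDiff ℝ (⊤ : ℕ∞) G) (hG0 : ∀ a, G (a, 0) = 0) :
    iteratedFDeriv ℝ n (G ∘ γ) =O[l] fun x => (γ x).2 := by
  induction n generalizing F with
  | zero =>
    exact .of_norm_left <|
      (isBigO_comp_snd_of_forall_mk_zero hγ_bdd (hG.of_le (by simp)) hG0).norm_left.congr_left
        fun x => norm_iteratedFDeriv_zero.symm
  | succ n ih =>
    have hG_diff : Differentiable ℝ G := hG.differentiable (by simp)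
    have hG₁ : ContDiff ℝ (⊤ : ℕ∞) fun p => (fderiv ℝ G p).comp (X p) :=
      (hG.fderiv_right (by simp)).clm_comp hX
    have hG₁0 : ∀ a, (fderiv ℝ G (a, 0)).comp (X (a, 0)) = 0 := fun a => by
      ext v
      have htangent : X (a, 0) v = ((X (a, 0) v).1, 0) := Prod.ext rfl (hX0 a v)
      simpa [← htangent] using fderiv_apply_mk_zero hG0 (hG_diff (a, 0)) (X (a, 0) v).1
    refine .of_norm_left ((ih hG₁ hG₁0).norm_left.congr' ?_ .rfl)
    filter_upwards [hγ] with x hx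
    have hderiv : fderiv ℝ (G ∘ γ) =ᶠ[𝓝 x] (fun p => (fderiv ℝ G p).comp (X p)) ∘ γ :=
      hx.mono fun y hy => ((hG_diff (γ y)).hasFDerivAt.comp y hy).fderiv
    rw [← norm_iteratedFDeriv_fderiv, (hderiv.iteratedFDeriv ℝ n).self_of_nhds]

end TotalDifferentialEquation

section RadialFunctions

variable {E : Type*} [NormedAddCommGroup E] [InnerProductSpace ℝ E]

theorem hasFDerivAt_norm {x : E} (hx : x ≠ 0) :
    HasFDerivAt (fun y : E => ‖y‖) (innerSL ℝ (‖x‖⁻¹ • x)) x := by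
  have hnorm : ‖x‖ ≠ 0 := norm_ne_zero_iff.2 hx
  have hsqrt := (hasStrictFDerivAt_norm_sq x).hasFDerivAt.sqrt (pow_ne_zero 2 hnorm)
  simp only [Real.sqrt_sq (norm_nonneg _)] at hsqrt
  refine hsqrt.congr_fderiv ?_
  ext v
  simp only [one_div, mul_inv_rev, smul_apply, coe_innerSL_apply, nsmul_eq_mul, Nat.cast_ofNat,
    smul_eq_mul, map_smul]
  field_simp

theorem hasFDerivAt_norm_inv {x : E} (hx : x ≠ 0) :
    HasFDerivAt (fun y : E => ‖y‖⁻¹) (-(‖x‖⁻¹ ^ 2) • innerSL ℝ (‖x‖⁻¹ • x)) x := by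
  refine ((hasDerivAt_inv (norm_ne_zero_iff.2 hx)).comp_hasFDerivAt x
    (hasFDerivAt_norm hx)).congr_fderiv ?_
  rw [inv_pow]

theorem hasFDerivAt_norm_inv_smul {x : E} (hx : x ≠ 0) :
    HasFDerivAt (fun y : E => ‖y‖⁻¹ • y)
      (‖x‖⁻¹ • (.id ℝ E - (innerSL ℝ (‖x‖⁻¹ • x)).smulRight (‖x‖⁻¹ • x))) x := by
  refine ((hasFDerivAt_norm_inv hx).smul (hasFDerivAt_id x)).congr_fderiv ?_
  ext v
  simp only [inv_pow, map_smul, neg_smul, id_eq, add_apply, smul_apply, neg_apply, sub_apply,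
    ContinuousLinearMap.id_apply, ContinuousLinearMap.smulRight_apply, coe_innerSL_apply,
    smul_eq_mul]
  module

/--
The vector field of the total differential equation satisfied by `radialJet u u'` when
`u'' = F(u) - (c / r) u'`. Its arguments `((s, θ), (y, z))` stand for `1 / ‖x‖`, `x / ‖x‖`, `u` and
`u'`; since `1 / ‖x‖` is an independent variable, the field is smooth everywhere.
-/
noncomputable def radialField (F : ℝ → ℝ) (c : ℝ) (p : (ℝ × E) × (ℝ × ℝ)) :
    E →L[ℝ] (ℝ × E) × (ℝ × ℝ) :=
  let s := p.1.1
  let θ := p.1.2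
  let y := p.2.1
  let z := p.2.2
  ((-(s ^ 2) • innerSL ℝ θ).prod (s • (.id ℝ E - (innerSL ℝ θ).smulRight θ))).prod
    ((z • innerSL ℝ θ).prod ((F y - c * s * z) • innerSL ℝ θ))

/--
The polar coordinates of `x`, the radius being inverted so that they stay bounded at infinity,
together with the values at `‖x‖` of a profile `u` and of its derivative `u'`.
-/
noncomputable def radialJet (u u' : ℝ → ℝ) (x : E) : (ℝ × E) × (ℝ × ℝ) :=
  ((‖x‖⁻¹, ‖x‖⁻¹ • x), (u ‖x‖, u' ‖x‖))

theorem contDiff_radialField [FiniteDimensional ℝ E] {F : ℝ → ℝ} {n : ℕ∞} (hF : ContDiff ℝ n F)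
    (c : ℝ) : ContDiff ℝ n (radialField (E := E) F c) := by
  refine contDiff_clm_apply_iff.2 fun v => ?_
  have hswap : ∀ θ : E, innerSL ℝ θ v = innerSL ℝ v θ := fun θ => real_inner_comm v θ
  simp only [radialField, ContinuousLinearMap.prod_apply, smul_apply, sub_apply,
    ContinuousLinearMap.smulRight_apply, ContinuousLinearMap.id_apply, hswap]
  fun_prop

theorem hasFDerivAt_radialJet {F u u' : ℝ → ℝ} {c : ℝ} {x : E} (hx : x ≠ 0)
    (hu : HasDerivAt u (u' ‖x‖) ‖x‖) (hu' : HasDerivAt u' (F (u ‖x‖) - c / ‖x‖ * u' ‖x‖) ‖x‖) :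
    HasFDerivAt (radialJet u u') (radialField F c (radialJet u u' x)) x :=
  ((hasFDerivAt_norm_inv hx).prodMk (hasFDerivAt_norm_inv_smul hx)).prodMk
    ((hu.comp_hasFDerivAt x (hasFDerivAt_norm hx)).prodMk
      (hu'.comp_hasFDerivAt x (hasFDerivAt_norm hx)))

theorem radialJet_isBigO_one [ProperSpace E] {u u' : ℝ → ℝ} (hu : u =O[atTop] (1 : ℝ → ℝ))
    (hu' : u' =O[atTop] (1 : ℝ → ℝ)) :
    radialJet u u' =O[cocompact E] (1 : E → ℝ) := by
  have hinv : Tendsto (fun x : E => ‖x‖⁻¹) (cocompact E) (𝓝 0) :=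
    tendsto_inv_atTop_zero.comp tendsto_norm_cocompact_atTop
  have hdir : (fun x : E => ‖x‖⁻¹ • x) =O[cocompact E] (1 : E → ℝ) := by
    refine .of_bound 1 (.of_forall fun x => ?_)
    simpa [norm_smul] using inv_mul_le_one
  exact ((hinv.isBigO_one ℝ).prod_left hdir).prod_left
    ((hu.comp_tendsto tendsto_norm_cocompact_atTop).prod_left
      (hu'.comp_tendsto tendsto_norm_cocompact_atTop))

theorem iteratedFDeriv_comp_norm_isBigO {E : Type} [NormedAddCommGroup E] [InnerProductSpace ℝ E]
    [FiniteDimensional ℝ E] {F u u' w : ℝ → ℝ} {c : ℝ} (hF : ContDiff ℝ (⊤ : ℕ∞) F) (hF0 : F 0 = 0)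
    (hu : ∀ᶠ r in atTop, HasDerivAt u (u' r) r)
    (hu' : ∀ᶠ r in atTop, HasDerivAt u' (F (u r) - c / r * u' r) r)
    (hw : w =O[atTop] (1 : ℝ → ℝ)) (huw : u =O[atTop] w) (hu'w : u' =O[atTop] w) (n : ℕ) :
    iteratedFDeriv ℝ n (fun x : E => u ‖x‖) =O[cocompact E] fun x => w ‖x‖ := by
  have hnorm := tendsto_norm_cocompact_atTop (E := E)
  have hjet : ∀ᶠ x in cocompact E, ∀ᶠ y in 𝓝 x,
      HasFDerivAt (radialJet u u') (radialField F c (radialJet u u' y)) y := by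
    obtain ⟨R, hR⟩ := eventually_atTop.1 (hu.and hu')
    filter_upwards [hnorm.eventually_gt_atTop (max R 0)] with x hx
    filter_upwards [(isOpen_lt continuous_const continuous_norm).mem_nhds hx] with y hy
    obtain ⟨hRy, hy0⟩ := max_lt_iff.1 hy
    exact hasFDerivAt_radialJet (norm_pos_iff.1 hy0) (hR _ hRy.le).1 (hR _ hRy.le).2
  have hbdd : radialJet u u' =O[cocompact E] (1 : E → ℝ) :=
    radialJet_isBigO_one (huw.trans hw) (hu'w.trans hw)
  have hjet_snd : (fun x : E => (radialJet u u' x).2) =O[cocompact E] fun x => w ‖x‖ :=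
    (huw.comp_tendsto hnorm).prod_left (hu'w.comp_tendsto hnorm)
  have hderiv := iteratedFDeriv_comp_isBigO_snd (G := fun p : (ℝ × E) × (ℝ × ℝ) => p.2.1)
    (contDiff_radialField (E := E) hF c) (fun a v => by simp [radialField, hF0]) hjet hbdd n
    (by fun_prop) fun _ => rfl
  exact hderiv.trans hjet_snd

theorem iteratedFDeriv_comp_norm_isBigO_rpow_mul_exp_neg_sqrt {E : Type} [NormedAddCommGroup E]
    [InnerProductSpace ℝ E] [FiniteDimensional ℝ E] {F u u' : ℝ → ℝ} {k ω : ℝ}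
    (hF : ContDiff ℝ (⊤ : ℕ∞) F) (hF0 : F 0 = 0) (hF' : HasDerivAt F ω 0) (hω : 0 < ω)
    (hu : ∀ᶠ r in atTop, HasDerivAt u (u' r) r)
    (hu' : ∀ᶠ r in atTop, HasDerivAt u' (F (u r) - 2 * k / r * u' r) r)
    (hpos : ∀ᶠ r in atTop, 0 < u r) (hlim : Tendsto u atTop (𝓝 0)) (n : ℕ) :
    iteratedFDeriv ℝ n (fun x : E => u ‖x‖) =O[cocompact E]
      fun x => ‖x‖ ^ (-k) * Real.exp (-√ω * ‖x‖) := by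
  have hu_decay : u =O[atTop] fun r => r ^ (-k) * Real.exp (-√ω * r) :=
    radial_isBigO_rpow_mul_exp_neg_sqrt (mod_cast contDiff_infty.1 hF 2) hF0 hF' hω hu hu' hpos hlim
  have hu'_decay := (radial_deriv_isBigO_self hF0 hF' hω hu hu' hpos hlim).trans hu_decay
  have hbdd := (tendsto_rpow_mul_exp_neg_mul_atTop_nhds_zero (-k) (√ω)
    (Real.sqrt_pos.2 hω)).isBigO_one ℝ
  exact iteratedFDeriv_comp_norm_isBigO hF hF0 hu hu' hbdd hu_decay hu'_decay n

end RadialFunctions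

section RadialLaplacian

theorem hasFDerivAt_comp_norm_zero {E : Type*} [NormedAddCommGroup E] [NormedSpace ℝ E] {u : ℝ → ℝ}
    (hu : HasDerivAt u 0 0) : HasFDerivAt (fun x : E => u ‖x‖) (0 : E →L[ℝ] ℝ) 0 := by
  have hnorm : Tendsto (fun x : E => ‖x‖) (𝓝 0) (𝓝 0) := tendsto_norm_zero
  have hlittleO := ((hasDerivAt_iff_isLittleO_nhds_zero.1 hu).comp_tendsto hnorm).of_norm_right
  exact hasFDerivAt_iff_isLittleO_nhds_zero.2 (by simpa [Function.comp_def] using hlittleO)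

theorem lap_comp_norm {d : ℕ} {u u' : ℝ → ℝ} {u'' : ℝ} {x : EuclideanSpace ℝ (Fin d)} (hx : x ≠ 0)
    (hu : ∀ᶠ r in 𝓝 ‖x‖, HasDerivAt u (u' r) r) (hu' : HasDerivAt u' u'' ‖x‖) :
    lap (fun y => u ‖y‖) x = u'' + (d - 1) / ‖x‖ * u' ‖x‖ := by
  set θ := ‖x‖⁻¹ • x with hθ
  have hpartial : ∀ i, (fun y => fderiv ℝ (fun y : EuclideanSpace ℝ (Fin d) => u ‖y‖) y
      (EuclideanSpace.single i 1)) =ᶠ[𝓝 x] fun y => u' ‖y‖ * (‖y‖⁻¹ • y) i := by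
    intro i
    filter_upwards [continuous_norm.continuousAt.eventually hu, isOpen_ne.mem_nhds hx] with y hy hy0
    have hgrad : HasFDerivAt (fun y : EuclideanSpace ℝ (Fin d) => u ‖y‖) _ y :=
      hy.comp_hasFDerivAt y (hasFDerivAt_norm hy0)
    simp [hgrad.fderiv, EuclideanSpace.inner_single_right]
  have hpartial₂ : ∀ i, fderiv ℝ (fun y => fderiv ℝ (fun y => u ‖y‖) y
      (EuclideanSpace.single i 1)) x (EuclideanSpace.single i 1) =
      u'' * θ i ^ 2 + u' ‖x‖ * (‖x‖⁻¹ * (1 - θ i ^ 2)) := by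
    intro i
    have hcoord : HasFDerivAt (fun y : EuclideanSpace ℝ (Fin d) => (‖y‖⁻¹ • y) i) _ x :=
      (EuclideanSpace.proj (𝕜 := ℝ) i).hasFDerivAt.comp x (hasFDerivAt_norm_inv_smul hx)
    have hprod : HasFDerivAt
        (fun y : EuclideanSpace ℝ (Fin d) => u' ‖y‖ * (‖y‖⁻¹ • y) i) _ x :=
      (hu'.comp_hasFDerivAt x (hasFDerivAt_norm hx)).mul hcoord
    rw [(hpartial i).fderiv_eq, hprod.fderiv]
    simp only [hθ, map_smul, add_apply, smul_apply, sub_apply, smul_eq_mul, Function.comp_apply,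
      ContinuousLinearMap.comp_apply, ContinuousLinearMap.id_apply,
      ContinuousLinearMap.smulRight_apply, coe_innerSL_apply, EuclideanSpace.inner_single_right,
      PiLp.smul_apply, PiLp.sub_apply, PiLp.proj_apply, PiLp.single_eq_same, Real.ringHom_apply]
    ring
  have hsum : ∑ i, θ i ^ 2 = 1 := by
    rw [← EuclideanSpace.real_norm_sq_eq]
    simp [hθ, norm_smul, hx]
  simp only [lap, hpartial₂, Finset.sum_add_distrib, ← Finset.mul_sum, Finset.sum_sub_distrib, hsum,
    Finset.sum_const, Finset.card_univ, Fintype.card_fin, nsmul_eq_mul]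
  ring

end RadialLaplacian

section ParametricIntegral

universe u

open MeasureTheory

theorem hasFDerivAt_parametric_intervalIntegral {E F : Type*} [NormedAddCommGroup E]
    [NormedSpace ℝ E] [ProperSpace E] [NormedAddCommGroup F] [NormedSpace ℝ F]
    {G : E × ℝ → F} (hG : ContDiff ℝ 1 G) (a b : ℝ) (x : E) :
    HasFDerivAt (fun x => ∫ t in a..b, G (x, t))
      (∫ t in a..b, (fderiv ℝ G (x, t)).comp (.inl ℝ E ℝ)) x := by
  have hG_cont : Continuous G := hG.continuous
  have hG'_cont : Continuous fun p => (fderiv ℝ G p).comp (.inl ℝ E ℝ) :=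
    (hG.continuous_fderiv one_ne_zero).clm_comp continuous_const
  obtain ⟨C, hC⟩ := ((isCompact_closedBall x 1).prod isCompact_uIcc).exists_bound_of_continuousOn
    (hG'_cont.continuousOn (s := Metric.closedBall x 1 ×ˢ uIcc a b))
  exact intervalIntegral.hasFDerivAt_integral_of_dominated_of_fderiv_le (bound := fun _ => C)
    (F := fun y t => G (y, t)) (F' := fun y t => (fderiv ℝ G (y, t)).comp (.inl ℝ E ℝ))
    (Metric.closedBall_mem_nhds x one_pos)
    (.of_forall fun y => (hG_cont.comp (.prodMk_right y)).aestronglyMeasurable)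
    ((hG_cont.comp (.prodMk_right x)).intervalIntegrable _ _)
    (hG'_cont.comp (.prodMk_right x)).aestronglyMeasurable
    (.of_forall fun t ht y hy => hC (y, t) ⟨hy, uIoc_subset_uIcc ht⟩)
    intervalIntegrable_const
    (.of_forall fun t _ y _ => HasFDerivAt.comp (g := G) (f := fun e => (e, t)) y
      (hG.differentiable one_ne_zero (y, t)).hasFDerivAt (hasFDerivAt_prodMk_left y t))

theorem contDiff_parametric_intervalIntegral {E F : Type u} [NormedAddCommGroup E]
    [NormedSpace ℝ E] [ProperSpace E] [NormedAddCommGroup F] [NormedSpace ℝ F]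
    {n : ℕ} {G : E × ℝ → F} (hG : ContDiff ℝ n G) (a b : ℝ) :
    ContDiff ℝ n fun x => ∫ t in a..b, G (x, t) := by
  induction n generalizing F with
  | zero =>
    exact contDiff_zero.2 <| intervalIntegral.continuous_parametric_intervalIntegral_of_continuous'
      (f := fun x t => G (x, t)) hG.continuous a b
  | succ n ih =>
    have hG' : ContDiff ℝ n fun p => (fderiv ℝ G p).comp (.inl ℝ E ℝ) :=
      (hG.fderiv_right (by simp)).clm_comp contDiff_const
    exact contDiff_succ_iff_hasFDerivAt.2
      ⟨_, ih hG', hasFDerivAt_parametric_intervalIntegral (hG.of_le (by simp)) a b⟩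

end ParametricIntegral

section Regularity

/-
Integrates `(r ^ n g)' = r ^ n f` from `0`, rescaled to the unit interval so that the formula makes
sense at `r = 0`.
-/
theorem eq_mul_integral_of_radial_ode {f g : ℝ → ℝ} {n : ℕ} (hf : Continuous f) (hg : Continuous g)
    (hg0 : g 0 = 0) (hode : ∀ r > 0, HasDerivAt g (f r - n / r * g r) r) {r : ℝ} (hr : 0 < r) :
    g r = r * ∫ t in (0 : ℝ)..1, t ^ n * f (t * r) := by
  have hderiv : ∀ t ∈ Ioo (0 : ℝ) 1,
      HasDerivAt (fun t => t ^ n * g (t * r)) (r * (t ^ n * f (t * r))) t := by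
    intro t ht
    have ht0 : t ≠ 0 := ht.1.ne'
    have hscaled := (hode (t * r) (mul_pos ht.1 hr)).comp t ((hasDerivAt_id t).mul_const r)
    refine ((hasDerivAt_pow n t).mul hscaled).congr_deriv ?_
    rcases n with _ | n
    · simp [mul_comm]
    · simp only [Nat.add_sub_cancel, Function.comp_apply, id_eq]
      field_simp
      ring
  rw [← intervalIntegral.integral_const_mul,
    intervalIntegral.integral_eq_sub_of_hasDerivAt_of_le zero_le_one (by fun_prop) hderiv
      (Continuous.intervalIntegrable (by fun_prop) _ _)]
  simp [hg0]

theorem deriv_zero_of_even {u : ℝ → ℝ} (hu : u.Even) : deriv u 0 = 0 := by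
  have hodd := deriv_comp_neg u 0
  simp only [hu.eq, neg_zero] at hodd
  linarith

theorem exists_contDiff_even_eq_comp_norm {E F : Type*} [NormedAddCommGroup E] [NormedSpace ℝ E]
    [Nontrivial E] [NormedAddCommGroup F] [NormedSpace ℝ F] {φ : E → F} {n : WithTop ℕ∞}
    (hφ : ContDiff ℝ n φ) (hrad : ∀ x y, ‖x‖ = ‖y‖ → φ x = φ y) :
    ∃ u : ℝ → F, ContDiff ℝ n u ∧ u.Even ∧ φ = fun x => u ‖x‖ := by
  obtain ⟨e, he⟩ := exists_norm_eq E zero_le_one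
  exact ⟨fun r => φ (r • e), hφ.comp (by fun_prop), fun r => hrad _ _ (by simp),
    funext fun x => hrad _ _ (by simp [norm_smul, he])⟩

variable {d : ℕ} {F u : ℝ → ℝ}

theorem hasDerivAt_deriv_of_lap_comp_norm_eq (hd : 1 ≤ d) (hu : ContDiff ℝ 2 u)
    (heq : ∀ x : EuclideanSpace ℝ (Fin d), lap (fun y => u ‖y‖) x = F (u ‖x‖)) {r : ℝ}
    (hr : 0 < r) : HasDerivAt (deriv u) (F (u r) - (d - 1) / r * deriv u r) r := by
  have : Nonempty (Fin d) := ⟨⟨0, hd⟩⟩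
  obtain ⟨x, rfl⟩ := exists_norm_eq (EuclideanSpace ℝ (Fin d)) hr.le
  have hu' := (hu.differentiable_deriv_two ‖x‖).hasDerivAt
  have hlap := lap_comp_norm (norm_pos_iff.1 hr)
    (.of_forall fun r => (hu.differentiable two_ne_zero r).hasDerivAt) hu'
  refine hu'.congr_deriv ?_
  rw [← heq, hlap]
  ring

theorem hasFDerivAt_of_lap_comp_norm_eq (hd : 1 ≤ d) (hF : Continuous F) (hu : ContDiff ℝ 2 u)
    (hu_even : u.Even)
    (heq : ∀ x : EuclideanSpace ℝ (Fin d), lap (fun y => u ‖y‖) x = F (u ‖x‖))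
    (x : EuclideanSpace ℝ (Fin d)) :
    HasFDerivAt (fun y => u ‖y‖)
      ((∫ t in (0 : ℝ)..1, t ^ (d - 1) * F (u ‖t • x‖)) • innerSL ℝ x) x := by
  have hu_deriv : ∀ r, HasDerivAt u (deriv u r) r := fun r =>
    (hu.differentiable two_ne_zero r).hasDerivAt
  have hu'0 : deriv u 0 = 0 := deriv_zero_of_even hu_even
  rcases eq_or_ne x 0 with rfl | hx
  · simpa using hasFDerivAt_comp_norm_zero (E := EuclideanSpace ℝ (Fin d))
      ((hu_deriv 0).congr_deriv hu'0)
  have hnorm : 0 < ‖x‖ := norm_pos_iff.2 hx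
  have hint : deriv u ‖x‖ = ‖x‖ * ∫ t in (0 : ℝ)..1, t ^ (d - 1) * F (u (t * ‖x‖)) := by
    refine eq_mul_integral_of_radial_ode (hF.comp hu.continuous) (hu.continuous_deriv one_le_two)
      hu'0 (fun r hr => ?_) hnorm
    simpa [hd] using hasDerivAt_deriv_of_lap_comp_norm_eq hd hu heq hr
  have hnorm_smul : ∫ t in (0 : ℝ)..1, t ^ (d - 1) * F (u ‖t • x‖) =
      ∫ t in (0 : ℝ)..1, t ^ (d - 1) * F (u (t * ‖x‖)) := by
    refine intervalIntegral.integral_congr fun t ht => ?_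
    rw [uIcc_of_le zero_le_one] at ht
    simp only [norm_smul, Real.norm_of_nonneg ht.1]
  refine ((hu_deriv _).comp_hasFDerivAt x (hasFDerivAt_norm hx)).congr_fderiv ?_
  rw [hint, hnorm_smul, map_smul, smul_smul, mul_right_comm, mul_inv_cancel₀ hnorm.ne', one_mul]

theorem contDiff_of_hasFDerivAt_integral {E : Type} [NormedAddCommGroup E] [InnerProductSpace ℝ E]
    [ProperSpace E] {φ : E → ℝ} {n : ℕ} (hF : ContDiff ℝ (⊤ : ℕ∞) F)
    (hφ : ∀ x, HasFDerivAt φ ((∫ t in (0 : ℝ)..1, t ^ n * F (φ (t • x))) • innerSL ℝ x) x) :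
    ContDiff ℝ (⊤ : ℕ∞) φ := by
  refine contDiff_infty.2 fun m => ?_
  induction m with
  | zero =>
    exact contDiff_zero.2 (continuous_iff_continuousAt.2 fun x => (hφ x).continuousAt)
  | succ m ih =>
    have hintegrand : ContDiff ℝ m fun p : E × ℝ => p.2 ^ n * F (φ (p.2 • p.1)) :=
      (contDiff_snd.pow n).mul
        ((contDiff_infty.1 hF m).comp (ih.comp (contDiff_snd.smul contDiff_fst)))
    exact contDiff_succ_iff_hasFDerivAt.2 ⟨_,
      (contDiff_parametric_intervalIntegral hintegrand 0 1).smul (innerSL ℝ).contDiff, hφ⟩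

end Regularity

section Bounds

theorem map_norm_cocompact {E : Type*} [NormedAddCommGroup E] [NormedSpace ℝ E] [ProperSpace E]
    [Nontrivial E] : map norm (cocompact E) = atTop := by
  rw [← Metric.cobounded_eq_cocompact, ← comap_norm_atTop]
  exact map_comap_of_mem (mem_of_superset (Ici_mem_atTop 0) (range_norm E).ge)

theorem exists_forall_norm_le_mul_of_isBigO_cocompact {X E : Type*} [TopologicalSpace X]
    [NormedAddCommGroup E] {f : X → E} {g : X → ℝ} (hf : Continuous f) (hg : Continuous g)
    (hg_pos : ∀ x, 0 < g x) (hfg : f =O[cocompact X] g) :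
    ∃ C, 0 < C ∧ ∀ x, ‖f x‖ ≤ C * g x := by
  have hbigO : (fun x => ‖f x‖ * (g x)⁻¹) =O[cocompact X] (1 : X → ℝ) :=
    (hfg.norm_left.mul (isBigO_refl (fun x => (g x)⁻¹) _)).congr_right
      fun x => mul_inv_cancel₀ (hg_pos x).ne'
  have hquot : Continuous fun x => ‖f x‖ * (g x)⁻¹ := hf.norm.mul (hg.inv₀ fun x => (hg_pos x).ne')
  obtain ⟨C, hC_pos, hC⟩ := (hquot.isBounded_range_iff_isBigO.2 hbigO).exists_pos_norm_le
  refine ⟨C, hC_pos, fun x => (mul_inv_le_iff₀ (hg_pos x)).1 ?_⟩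
  exact (le_abs_self _).trans (hC _ (mem_range_self x))

theorem rpow_isBigO_one_add_rpow (s : ℝ) :
    (fun r : ℝ => r ^ s) =O[atTop] fun r => (1 + r) ^ s := by
  have hequiv : (fun r : ℝ => 1 + r) ~[atTop] fun r => r :=
    IsEquivalent.refl.const_add_of_norm_tendsto_atTop tendsto_norm_atTop_atTop
  refine (IsTheta.rpow (eventually_ge_atTop 0) ?_ hequiv.symm.isTheta).isBigO
  filter_upwards [eventually_ge_atTop 0] with r hr using add_nonneg zero_le_one hr

end Bounds

theorem hasDerivAt_mul_id_zero {g : ℝ → ℝ} (hg : ContinuousAt g 0) :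
    HasDerivAt (fun y => g y * y) (g 0) 0 := by
  refine hasDerivAt_iff_tendsto_slope_zero.2 ((hg.tendsto.mono_left nhdsWithin_le_nhds).congr' ?_)
  filter_upwards [self_mem_nhdsWithin] with t ht
  simp [mul_comm (g t), inv_mul_cancel_left₀ (show t ≠ 0 from ht)]

theorem ground_state_exponential_decay_general {d : ℕ} (hd : 1 ≤ d) {ω : ℝ} (hω : 0 < ω)
    {F : ℝ → ℝ} (hF : ContDiff ℝ (⊤ : ℕ∞) F) (hF0 : F 0 = 0) (hF' : HasDerivAt F ω 0)
    {φ : EuclideanSpace ℝ (Fin d) → ℝ} (hφC2 : ContDiff ℝ 2 φ)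
    (hφpos : ∀ᶠ x in cocompact (EuclideanSpace ℝ (Fin d)), 0 < φ x)
    (hφrad : ∀ x y, ‖x‖ = ‖y‖ → φ x = φ y) (heq : ∀ x, lap φ x = F (φ x))
    (hdecay : Tendsto φ (cocompact (EuclideanSpace ℝ (Fin d))) (𝓝 0)) (n : ℕ) :
    ∃ C : ℝ, 0 < C ∧ ∀ x, ‖iteratedFDeriv ℝ n φ x‖ ≤
      C * (1 + ‖x‖) ^ (-(((d : ℝ) - 1) / 2)) * Real.exp (-√ω * ‖x‖) := by
  have : Nonempty (Fin d) := ⟨⟨0, hd⟩⟩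
  obtain ⟨u, hu, hu_even, rfl⟩ := exists_contDiff_even_eq_comp_norm hφC2 hφrad
  have hnorm := map_norm_cocompact (E := EuclideanSpace ℝ (Fin d))
  have hpos : ∀ᶠ r in atTop, 0 < u r := by rwa [← hnorm, eventually_map]
  have hlim : Tendsto u atTop (𝓝 0) := by rwa [← hnorm, tendsto_map'_iff]
  have hode : ∀ᶠ r in atTop,
      HasDerivAt (deriv u) (F (u r) - 2 * (((d : ℝ) - 1) / 2) / r * deriv u r) r := by
    filter_upwards [eventually_gt_atTop 0] with r hr
    rw [mul_div_cancel₀ _ two_ne_zero]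
    exact hasDerivAt_deriv_of_lap_comp_norm_eq hd hu heq hr
  have hsmooth : ContDiff ℝ (⊤ : ℕ∞) fun x : EuclideanSpace ℝ (Fin d) => u ‖x‖ :=
    contDiff_of_hasFDerivAt_integral hF
      (hasFDerivAt_of_lap_comp_norm_eq hd hF.continuous hu hu_even heq)
  have hbigO := iteratedFDeriv_comp_norm_isBigO_rpow_mul_exp_neg_sqrt hF hF0 hF' hω
    (.of_forall fun r => (hu.differentiable two_ne_zero r).hasDerivAt) hode hpos hlim n
    (E := EuclideanSpace ℝ (Fin d))
  have hweight := ((rpow_isBigO_one_add_rpow (-(((d : ℝ) - 1) / 2))).comp_tendsto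
    (tendsto_norm_cocompact_atTop (E := EuclideanSpace ℝ (Fin d)))).mul
      (isBigO_refl (fun x => Real.exp (-√ω * ‖x‖)) _)
  simp only [mul_assoc]
  refine exists_forall_norm_le_mul_of_isBigO_cocompact
    (hsmooth.continuous_iteratedFDeriv (mod_cast le_top)) ?_ (fun x => by positivity)
    (hbigO.trans hweight)
  exact (Continuous.rpow_const (by fun_prop) fun x => .inl (by positivity)).mul (by fun_prop)

/-- Exponential decay of ground states: a positive radial `C²` solution of
`Δφ = ωφ + β(φ²)φ` vanishing at infinity satisfies
`|∂^α φ(x)| ≤ C_α (1+|x|)^{-(d-1)/2} e^{-√ω |x|}` for every multi-index `α`. -/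
theorem ground_state_exponential_decay
    {d : ℕ} (hd : 1 ≤ d) (ω : ℝ) (hω : 0 < ω)
    (β : ℝ → ℝ) (hβ : ContDiff ℝ (⊤ : ℕ∞) β) (hβ0 : β 0 = 0)
    (φ : EuclideanSpace ℝ (Fin d) → ℝ) (hφC2 : ContDiff ℝ 2 φ)
    (hφpos : ∀ x, 0 < φ x)
    (hφrad : ∀ x y, ‖x‖ = ‖y‖ → φ x = φ y)
    (heq : ∀ x, lap φ x = ω * φ x + β ((φ x) ^ 2) * φ x)
    (hdecay : Filter.Tendsto φ (Filter.cocompact (EuclideanSpace ℝ (Fin d))) (𝓝 0)) :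
    ∀ n : ℕ, ∃ C : ℝ, 0 < C ∧ ∀ x,
      ‖iteratedFDeriv ℝ n φ x‖ ≤
        C * (1 + ‖x‖) ^ (-(((d : ℝ) - 1) / 2)) * Real.exp (-(Real.sqrt ω) * ‖x‖) := by
  have hcont : Continuous fun y => ω + β (y ^ 2) :=
    continuous_const.add (hβ.continuous.comp (continuous_pow 2))
  have hderiv : HasDerivAt (fun y => ω * y + β (y ^ 2) * y) ω 0 := by
    simpa [hβ0, add_mul] using hasDerivAt_mul_id_zero hcont.continuousAt
  exact ground_state_exponential_decay_general hd hω (by fun_prop) (by simp) hderiv hφC2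
    (.of_forall hφpos) hφrad heq hdecay
end
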